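/- arXiv:0712.3486 — 7 statements merged into one kernel-verified Lean document; each statement's English description precedes it below -/
import Mathlib

section
/- For every separable Banach space X there exists a sequence (a_k)_{k≥1} of elements of X such that: (1) for every infinite subset A ⊆ ℕ, the closed linear span of {a_k : k ∈ A} equals X; and (2) for every bounded linear operator T : X → X, the set {T a_k / ‖T a_k‖ : k ≥ 1, T a_k ≠ 0} is relatively compact in X. -/
open Filter Topology

lemma crc_aux_lim : Tendsto (fun k : ℕ => (((k : ℝ) + 1)⁻¹ : ℝ)) atTop (𝓝 0) := by
  simpa using tendsto_one_div_add_atTop_nhds_zero_nat (𝕜 := ℝ)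

lemma crc_aux_limC : Tendsto (fun k : ℕ => ((((k : ℝ) + 1)⁻¹ : ℝ) : ℂ)) atTop (𝓝 0) := by
  have h := (Complex.continuous_ofReal.tendsto 0).comp crc_aux_lim
  rw [Complex.ofReal_zero] at h
  exact h

lemma crc_aux_series {X : Type*} [NormedAddCommGroup X] [NormedSpace ℂ X] [CompleteSpace X]
    (x : ℕ → X) (hx : ∀ n, ‖x n‖ ≤ 1) :
    ∃ f : ℂ → X, HasFPowerSeriesAt f
      (fun n => ContinuousMultilinearMap.mkPiRing ℂ (Fin n) (x n)) 0 := by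
  set p : FormalMultilinearSeries ℂ ℂ X :=
    fun n => ContinuousMultilinearMap.mkPiRing ℂ (Fin n) (x n) with hp
  have h : ((1 : NNReal) : ENNReal) ≤ p.radius := by
    apply p.le_radius_of_bound 1
    intro n
    simpa [hp] using hx n
  exact ⟨p.sum, (p.hasFPowerSeriesOnBall (lt_of_lt_of_le (by simp) h)).hasFPowerSeriesAt⟩

lemma crc_aux_compact {Y : Type*} [NormedAddCommGroup Y] [NormedSpace ℂ Y]
    (f : ℂ → Y) (hf : AnalyticAt ℂ f 0) :
    ∃ l : Y, Tendsto (fun k : ℕ => ‖f ((((k : ℝ) + 1)⁻¹ : ℝ) : ℂ)‖⁻¹ •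
      f ((((k : ℝ) + 1)⁻¹ : ℝ) : ℂ)) atTop (𝓝 l) := by
  by_cases h0 : ∀ᶠ z in 𝓝 0, f z = 0
  · refine ⟨0, tendsto_const_nhds.congr' ?_⟩
    filter_upwards [crc_aux_limC.eventually h0] with k hk
    rw [hk]; simp
  · obtain ⟨n, g, hg, hg0, hfg⟩ := hf.exists_eventuallyEq_pow_smul_nonzero_iff.mpr h0
    refine ⟨‖g 0‖⁻¹ • g 0, ?_⟩
    have hgt := hg.continuousAt.tendsto.comp crc_aux_limC
    refine ((hgt.norm.inv₀ (norm_ne_zero_iff.mpr hg0)).smul hgt).congr' ?_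
    filter_upwards [crc_aux_limC.eventually hfg] with k hk
    rw [hk]
    simp only [Function.comp]
    have hpos : (0 : ℝ) < ((k : ℝ) + 1)⁻¹ := by positivity
    generalize ((k : ℝ) + 1)⁻¹ = t at hpos
    have e : ((t : ℂ) - 0) ^ n • g (t : ℂ) = (t ^ n : ℝ) • g (t : ℂ) := by
      rw [← Complex.coe_smul]; simp
    rw [e, norm_smul, smul_smul, Real.norm_of_nonneg (by positivity), mul_inv]
    congr 1
    have : t ^ n ≠ 0 := by positivity
    field_simp

/-- For every separable (complex) Banach space `X` there is a sequence `(aₖ)` such that the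
closed linear span of `{aₖ : k ∈ A}` is `X` for every infinite `A ⊆ ℕ`, and for every bounded
linear operator `T : X → X` the normalized sequence `{T aₖ / ‖T aₖ‖ : T aₖ ≠ 0}` is relatively
compact in `X`. -/
theorem exists_crc_like_generating_sequence
    (X : Type*) [NormedAddCommGroup X] [NormedSpace ℂ X] [CompleteSpace X]
    [TopologicalSpace.SeparableSpace X] :
    ∃ a : ℕ → X,
      (∀ A : Set ℕ, A.Infinite →
        (Submodule.span ℂ (a '' A)).topologicalClosure = ⊤) ∧
      ∀ T : X →L[ℂ] X,
        IsCompact (closure {v : X | ∃ k, T (a k) ≠ 0 ∧ v = ‖T (a k)‖⁻¹ • T (a k)}) := by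
  set d := TopologicalSpace.denseSeq X
  obtain ⟨f, hf⟩ := crc_aux_series (fun n => (((1 + ‖d n‖)⁻¹ : ℝ) : ℂ) • d n) (by
    intro n
    have h : 0 < 1 + ‖d n‖ := by positivity
    rw [norm_smul, Complex.norm_real, Real.norm_of_nonneg (by positivity), inv_mul_le_iff₀ h]
    linarith)
  refine ⟨fun k => f ((((k : ℝ) + 1)⁻¹ : ℝ) : ℂ), ?_, ?_⟩
  · intro A hA
    set S := (Submodule.span ℂ
      ((fun k : ℕ => f ((((k : ℝ) + 1)⁻¹ : ℝ) : ℂ)) '' A)).topologicalClosure with hS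
    have hSc : IsClosed (S : Set X) := Submodule.isClosed_topologicalClosure _
    let π : X →L[ℂ] X ⧸ S := S.mkQL
    have hker : ∀ y, π y = 0 ↔ y ∈ S := fun y => Submodule.Quotient.mk_eq_zero S
    obtain ⟨r, hr⟩ := hf
    have hπ := (π.comp_hasFPowerSeriesOnBall hr).hasFPowerSeriesAt
    have hfr : ∃ᶠ z in 𝓝[≠] (0 : ℂ), (π ∘ f) z = 0 := by
      have h1 : Tendsto (fun k : ℕ => ((((k : ℝ) + 1)⁻¹ : ℝ) : ℂ)) atTop (𝓝[≠] 0) := by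
        refine tendsto_nhdsWithin_iff.mpr ⟨crc_aux_limC, Eventually.of_forall fun k => ?_⟩
        have : ((k : ℝ) + 1)⁻¹ ≠ 0 := by positivity
        simpa only [Set.mem_compl_iff, Set.mem_singleton_iff, Complex.ofReal_eq_zero] using this
      refine h1.frequently ((Nat.frequently_atTop_iff_infinite.mpr hA).mono fun k hk => ?_)
      exact (hker _).mpr (Submodule.le_topologicalClosure _
        (Submodule.subset_span ⟨k, hk, rfl⟩))
    have hev := hπ.analyticAt.frequently_zero_iff_eventually_zero.mp hfr
    have hz := hπ.eq_zero_of_eventually hev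
    have hd : ∀ n, d n ∈ S := by
      intro n
      have h1 := congrArg (fun q => q n (fun _ => (1 : ℂ))) hz
      have h2 : π ((((1 + ‖d n‖)⁻¹ : ℝ) : ℂ) • d n) = 0 := by
        have h4 : π (ContinuousMultilinearMap.mkPiRing ℂ (Fin n)
          ((((1 + ‖d n‖)⁻¹ : ℝ) : ℂ) • d n) (fun _ => (1 : ℂ))) = 0 := h1
        rw [ContinuousMultilinearMap.mkPiRing_apply] at h4
        simpa only [Finset.prod_const_one, one_smul] using h4
      have h3 := (hker _).mp h2
      have h : ((1 + ‖d n‖)⁻¹ : ℝ) ≠ 0 := by positivity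
      exact (S.smul_mem_iff (Complex.ofReal_ne_zero.mpr h)).mp h3
    rw [eq_top_iff]
    intro y _
    have : closure (Set.range d) ⊆ (S : Set X) :=
      hSc.closure_subset_iff.mpr (by rintro _ ⟨n, rfl⟩; exact hd n)
    exact this (TopologicalSpace.denseRange_denseSeq X y)
  · intro T
    obtain ⟨l, hl⟩ := crc_aux_compact (fun z => T (f z)) (by
      obtain ⟨r, hr⟩ := hf
      exact (T.comp_hasFPowerSeriesOnBall hr).hasFPowerSeriesAt.analyticAt)
    refine hl.isCompact_insert_range.closure_of_subset ?_
    rintro v ⟨k, _, rfl⟩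
    exact Or.inr ⟨k, rfl⟩
end

section
/- Let X be a separable Hilbert space and F ⊆ H²(𝔻, X) a family of functions. If F is cyclic for the backward shift S*, then X_*(F) = X. -/
open scoped InnerProductSpace ENNReal
noncomputable section

/-- The Hardy space `H²(𝔻, X)` identified with `ℓ²(ℕ, X)`. -/
abbrev H2 (X : Type*) [NormedAddCommGroup X] [InnerProductSpace ℂ X] : Type _ :=
  lp (fun _ : ℕ => X) 2

variable {X : Type*} [NormedAddCommGroup X] [InnerProductSpace ℂ X]

/-- The backward shift `S*` on `H²(𝔻, X)`. -/
def bshift (f : H2 X) : H2 X :=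
  ⟨fun n => f (n + 1), by
    have h : Summable fun n : ℕ => ‖f n‖ ^ (2 : ℝ≥0∞).toReal :=
      (memℓp_gen_iff (by norm_num)).1 (lp.memℓp f)
    exact memℓp_gen ((summable_nat_add_iff 1).2 h)⟩

/-- `E_F`: the smallest closed `S*`-invariant subspace containing the family `F`. -/
def EF (F : Set (H2 X)) : Submodule ℂ (H2 X) :=
  (Submodule.span ℂ {g : H2 X | ∃ f ∈ F, ∃ n : ℕ, g = bshift^[n] f}).topologicalClosure

/-- `E_f` for a single function. -/
def Ef (f : H2 X) : Submodule ℂ (H2 X) :=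
  EF {f}

/-- `X_*(F) = ⋂_m closed-span {f̂(k) : k ≥ m, f ∈ F}`. -/
def XstarF (F : Set (H2 X)) : Submodule ℂ X :=
  ⨅ m : ℕ, (Submodule.span ℂ {x : X | ∃ f ∈ F, ∃ k ≥ m, x = f k}).topologicalClosure

def Xstar (f : H2 X) : Submodule ℂ X := XstarF {f}

/-- `P : X → X` is an orthogonal projection: idempotent and self-adjoint. -/
def IsOrthoProj {Y : Type*} [NormedAddCommGroup Y] [InnerProductSpace ℂ Y]
    (P : Y →L[ℂ] Y) : Prop :=
  (∀ x, P (P x) = P x) ∧ ∀ x y, ⟪P x, y⟫_ℂ = ⟪x, P y⟫_ℂ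

/-- A sequence in a Hilbert space is completely relatively compact if for every orthogonal
projection `P` the normalized sequence `{P aₖ / ‖P aₖ‖ : P aₖ ≠ 0}` is relatively compact. -/
def CRC {Y : Type*} [NormedAddCommGroup Y] [InnerProductSpace ℂ Y] (a : ℕ → Y) : Prop :=
  ∀ P : Y →L[ℂ] Y, IsOrthoProj P →
    IsCompact (closure {v : Y | ∃ k, P (a k) ≠ 0 ∧ v = ‖P (a k)‖⁻¹ • P (a k)})

/-- A subset of `ℕ` is Hadamard lacunary. -/
def HadLac (Λ : Set ℕ) : Prop :=
  ∃ d : ℝ, 1 < d ∧ ∀ m ∈ Λ, ∀ n ∈ Λ, m < n → d * m ≤ n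

/-- The Fourier spectrum. -/
def spec (f : H2 X) : Set ℕ := {k : ℕ | f k ≠ 0}

/-- `H²(𝔻, Y)` for a subspace `Y ⊆ X`, as a submodule of `H²(𝔻, X)`. -/
def H2sub (Y : Submodule ℂ X) : Submodule ℂ (H2 X) where
  carrier := {g : H2 X | ∀ n, g n ∈ Y}
  add_mem' := by
    intro a b ha hb n
    have : (↑(a + b) : ∀ _ : ℕ, X) n = a n + b n := by
      rw [lp.coeFn_add]; rfl
    rw [this]
    exact Y.add_mem (ha n) (hb n)
  zero_mem' := by
    intro n
    have : (↑(0 : H2 X) : ∀ _ : ℕ, X) n = 0 := by rw [lp.coeFn_zero]; rfl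
    rw [this]
    exact Y.zero_mem
  smul_mem' := by
    intro c a ha n
    have : (↑(c • a) : ∀ _ : ℕ, X) n = c • a n := by rw [lp.coeFn_smul]; rfl
    rw [this]
    exact Y.smul_mem c (ha n)

/-- A polynomial: finitely many nonzero Taylor coefficients. -/
def PolyH2 (f : H2 X) : Prop := {n : ℕ | f n ≠ 0}.Finite



/-- If a family `F ⊆ H²(𝔻, X)` is cyclic for the backward shift, then `X_*(F) = X`. -/
theorem Xstar_eq_top_of_cyclic {X : Type*} [NormedAddCommGroup X] [InnerProductSpace ℂ X] [CompleteSpace X]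
    [TopologicalSpace.SeparableSpace X]
    (F : Set (H2 X)) (hF : EF F = ⊤) : XstarF F = ⊤ := by
  rw [XstarF, iInf_eq_top]
  intro m
  rw [eq_top_iff]
  intro x _
  have hg : (lp.single 2 m x : H2 X) ∈ EF F := by rw [hF]; trivial
  have hit : ∀ (n : ℕ) (f : H2 X) (j : ℕ), (bshift^[n] f) j = f (j + n) := by
    intro n
    induction n with
    | zero => intro f j; rfl
    | succ n ih =>
      intro f j
      rw [Function.iterate_succ_apply, ih]
      rfl
  have key : EF F ≤ ((Submodule.span ℂ {x : X | ∃ f ∈ F, ∃ k ≥ m, x = f k}).topologicalClosure).comap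
      (lp.evalCLM ℂ (fun _ : ℕ => X) 2 m).toLinearMap := by
    apply Submodule.topologicalClosure_minimal
    · rw [Submodule.span_le]
      rintro g ⟨f, hf, n, rfl⟩
      apply Submodule.le_topologicalClosure
      apply Submodule.subset_span
      exact ⟨f, hf, m + n, Nat.le_add_right _ _, hit n f m⟩
    · exact (Submodule.isClosed_topologicalClosure _).preimage
        (lp.evalCLM ℂ (fun _ : ℕ => X) 2 m).continuous
  have h := key hg
  have e : (lp.single 2 m x : H2 X) m = x := lp.single_apply_self (E := fun _ : ℕ => X) 2 m x
  exact e ▸ h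

end
end

section
/- Let X be a separable Hilbert space and let f(z) = ∑_{k≥1} a_k z^{n_k} ∈ H²(𝔻, X) be a lacunary series (so (n_k)_{k≥1} is a Hadamard lacunary sequence) such that the coefficient sequence (a_k)_{k≥1} is completely relatively compact. Then E_f = H²(𝔻, X_*(f)) ⊕ E_p as an orthogonal direct sum of closed subspaces of H²(𝔻, X), where p = f − P_{H²(𝔻, X_*(f))} f is a polynomial and P_{H²(𝔻, X_*(f))} is the orthogonal projection of H²(𝔻, X) onto H²(𝔻, X_*(f)). -/
open scoped InnerProductSpace ENNReal
noncomputable section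

variable {X : Type*} [NormedAddCommGroup X] [InnerProductSpace ℂ X]

/-- Counting: pairs in a lacunary set with a given difference are boundedly many. -/
lemma lac_card {Λ : Set ℕ} (h : HadLac Λ) :
    ∃ C : ℕ, ∀ r : ℕ, ∀ S : Finset ℕ, (∀ n ∈ S, n ∈ Λ ∧ n + (r + 1) ∈ Λ) → S.card ≤ C := by
  obtain ⟨d, hd, hΛ⟩ := h
  obtain ⟨N, hN⟩ := pow_unbounded_of_one_lt (d / (d - 1)) hd
  refine ⟨N, fun r S hS => ?_⟩
  have key : ∀ S : Finset ℕ, (∀ n ∈ S, n ∈ Λ ∧ n + (r + 1) ∈ Λ) → S.Nonempty →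
      ∃ x ∈ S, ((r : ℝ) + 1) * d ^ S.card ≤ d * ((x : ℝ) + (r + 1)) := by
    intro S
    induction S using Finset.induction_on_max with
    | empty => intro _ h; exact absurd h (by simp)
    | insert a s has ih =>
      intro hs _
      refine ⟨a, by simp, ?_⟩
      have ha : a ∉ s := fun h => lt_irrefl _ (has a h)
      rw [Finset.card_insert_of_notMem ha]
      rcases s.eq_empty_or_nonempty with rfl | hne
      · simp
        nlinarith [(Nat.cast_nonneg a : (0:ℝ) ≤ a)]
      · obtain ⟨x, hx, hxx⟩ := ih (fun n hn => hs n (by simp [hn])) hne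
        have h1 := hΛ _ (hs x (by simp [hx])).2 _ (hs a (by simp)).2 (by have := has x hx; omega)
        push_cast at h1
        rw [pow_succ]
        nlinarith
  by_contra hlt
  push Not at hlt
  have hne : S.Nonempty := Finset.card_pos.1 (by omega)
  obtain ⟨x, hx, hxx⟩ := key S hS hne
  have h1 := hΛ _ (hS x hx).1 _ (hS x hx).2 (by omega)
  push_cast at h1
  have h2 : d ^ (N + 1) ≤ d ^ S.card := pow_le_pow_right₀ hd.le hlt
  rw [div_lt_iff₀ (by linarith)] at hN
  rw [pow_succ] at h2
  have hr : (0 : ℝ) < r + 1 := by positivity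
  have h3 : ((r : ℝ) + 1) * (d ^ N * d) ≤ d * ((x : ℝ) + (r + 1)) :=
    le_trans (mul_le_mul_of_nonneg_left h2 hr.le) hxx
  have h4 : ((r : ℝ) + 1) * d ^ N ≤ (x : ℝ) + (r + 1) := by
    have : d * (((r : ℝ) + 1) * d ^ N) ≤ d * ((x : ℝ) + (r + 1)) := by linarith
    exact le_of_mul_le_mul_left this (by linarith)
  have h5 : ((r : ℝ) + 1) * d ^ N * (d - 1) ≤ ((x : ℝ) + (r + 1)) * (d - 1) :=
    mul_le_mul_of_nonneg_right h4 (by linarith)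
  have h6 : ((r : ℝ) + 1) * d < ((r : ℝ) + 1) * (d ^ N * (d - 1)) := mul_lt_mul_of_pos_left hN hr
  nlinarith

open Classical in
lemma summable_pairs {Λ : Set ℕ} (h : HadLac Λ) (w : ℕ → ℝ) (hw0 : ∀ r, 0 ≤ w r)
    (hw : Summable w) :
    Summable fun n : ℕ => ∑' r : ℕ, if n ∈ Λ ∧ n + (r + 1) ∈ Λ then w r else 0 := by
  obtain ⟨C, hC⟩ := lac_card h
  have hb : ∀ r, ∀ u : Finset ℕ,
      ∑ n ∈ u, (if n ∈ Λ ∧ n + (r + 1) ∈ Λ then w r else 0) ≤ C * w r := by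
    intro r u
    rw [← Finset.sum_filter, Finset.sum_const, nsmul_eq_mul]
    refine mul_le_mul_of_nonneg_right ?_ (hw0 r)
    exact_mod_cast hC r _ (fun n hn => (Finset.mem_filter.1 hn).2)
  have h0 : ∀ r n, (0 : ℝ) ≤ if n ∈ Λ ∧ n + (r + 1) ∈ Λ then w r else 0 := by
    intro r n; split_ifs; exacts [hw0 r, le_rfl]
  have hs : Summable fun q : ℕ × ℕ => if q.2 ∈ Λ ∧ q.2 + (q.1 + 1) ∈ Λ then w q.1 else 0 := by
    rw [summable_prod_of_nonneg (fun q => h0 q.1 q.2)]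
    refine ⟨fun r => summable_of_sum_le (h0 r) (hb r), ?_⟩
    exact Summable.of_nonneg_of_le (fun r => tsum_nonneg (h0 r))
      (fun r => Real.tsum_le_of_sum_le (h0 r) (hb r)) (hw.mul_left (C : ℝ))
  exact hs.prod_symm.prod

/-- Divergence of `∑ t n / T (n+1)`, `T` the tails of a convergent series. -/
lemma not_summable_ratio (t : ℕ → ℝ) (ht0 : ∀ n, 0 ≤ t n) (ht : Summable t)
    (hpos : ∀ n, 0 < ∑' k, t (k + n)) :
    ¬ Summable fun n => t n / ∑' k, t (k + (n + 1)) := by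
  intro hs
  set T : ℕ → ℝ := fun n => ∑' k, t (k + n) with hT
  have hrec : ∀ n, T n = t n + T (n + 1) := by
    intro n
    have := ((summable_nat_add_iff n).2 ht).tsum_eq_zero_add
    simp only [hT]
    rw [this, zero_add]
    congr 1
    exact tsum_congr fun k => by rw [show k + 1 + n = k + (n + 1) by omega]
  have hstep : ∀ n, T n ≤ T (n + 1) * Real.exp (t n / T (n + 1)) := by
    intro n
    have h1 := Real.add_one_le_exp (t n / T (n + 1))
    have h2 : T n = T (n + 1) * (t n / T (n + 1) + 1) := by
      have : T (n + 1) ≠ 0 := (hpos (n + 1)).ne'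
      rw [hrec n]; field_simp
    rw [h2]
    exact mul_le_mul_of_nonneg_left h1 (hpos (n + 1)).le
  have hall : ∀ n, T 0 ≤ T n * Real.exp (∑ k ∈ Finset.range n, t k / T (k + 1)) := by
    intro n
    induction n with
    | zero => simp
    | succ n ih =>
      rw [Finset.sum_range_succ, add_comm (Finset.sum _ _), Real.exp_add, ← mul_assoc]
      exact ih.trans (mul_le_mul_of_nonneg_right (hstep n) (Real.exp_pos _).le)
  have hall2 : ∀ n, T 0 ≤ T n * Real.exp (∑' k, t k / T (k + 1)) := by
    intro n
    refine (hall n).trans (mul_le_mul_of_nonneg_left (Real.exp_le_exp.2 ?_) (hpos n).le)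
    exact hs.sum_le_tsum _ (fun k _ => div_nonneg (ht0 k) (hpos (k + 1)).le)
  have hlim : Filter.Tendsto (fun n => T n * Real.exp (∑' k, t k / T (k + 1))) Filter.atTop
      (nhds (0 * Real.exp (∑' k, t k / T (k + 1)))) := (tendsto_sum_nat_add t).mul_const _
  have := ge_of_tendsto' hlim hall2
  rw [zero_mul] at this
  exact absurd (hpos 0) (not_lt.2 this)

set_option maxHeartbeats 1000000 in
/-- The pairing estimate. -/
lemma pairing_estimate {Λ : Set ℕ} {d : ℝ} (hd : 1 < d)
    (hΛ : ∀ m ∈ Λ, ∀ n ∈ Λ, m < n → d * m ≤ n) (b g : ℕ → X)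
    (hbΛ : ∀ n, b n ≠ 0 → n ∈ Λ) (hb : Summable fun n => ‖b n‖ ^ 2)
    (hg : Summable fun n => ‖g n‖ ^ 2)
    (horth : ∀ n : ℕ, HasSum (fun i => ⟪g i, b (i + n)⟫_ℂ) 0) (m n : ℕ) (hn : b n ≠ 0)
    (hmn : m * d < n * (d - 1)) (s : ℝ) (hs : 0 < s) (W : ℕ → ℝ)
    (hW : Summable W) (hWg : ∀ r, b (r + (n + 1)) ≠ 0 → W r = ‖g (r + (m + 1))‖ ^ 2)
    (hW0 : ∀ r, 0 ≤ W r) :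
    2 * ‖⟪g m, b n⟫_ℂ‖ ≤ s * (∑' r, ‖b (r + (n + 1))‖ ^ 2) + s⁻¹ * ∑' r, W r := by
  have hmn' : m ≤ n := by
    have : (m : ℝ) * d ≤ n * d := by nlinarith [(Nat.cast_nonneg n : (0:ℝ) ≤ n)]
    exact_mod_cast le_of_mul_le_mul_right this (by linarith)
  have h := horth (n - m)
  have hzero : ∀ i < m, b (i + (n - m)) = 0 := by
    intro i hi
    by_contra hne
    have h1 := hΛ _ (hbΛ _ hne) _ (hbΛ _ hn) (by omega)
    have h2 : ((n : ℝ) - m) ≤ ((i + (n - m) : ℕ) : ℝ) := by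
      push_cast [Nat.cast_sub hmn']
      linarith [(Nat.cast_nonneg i : (0:ℝ) ≤ i)]
    nlinarith
  have hsum := h.summable.sum_add_tsum_nat_add (m + 1)
  rw [h.tsum_eq, Finset.sum_range_succ, Finset.sum_eq_zero (fun i hi => by
    rw [hzero i (Finset.mem_range.1 hi)]; simp), zero_add] at hsum
  have e1 : m + (n - m) = n := by omega
  have e2 : ∀ r, r + (m + 1) + (n - m) = r + (n + 1) := fun r => by omega
  simp only [e1, e2] at hsum
  have hn1 : ‖⟪g m, b n⟫_ℂ‖ = ‖∑' r, ⟪g (r + (m + 1)), b (r + (n + 1))⟫_ℂ‖ := by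
    rw [eq_neg_of_add_eq_zero_left hsum, norm_neg]
  have hB : Summable fun r => ‖b (r + (n + 1))‖ ^ 2 := (summable_nat_add_iff (n + 1)).2 hb
  have hS : Summable fun r => (s * ‖b (r + (n + 1))‖ ^ 2 + s⁻¹ * W r) / 2 :=
    ((hB.mul_left s).add (hW.mul_left s⁻¹)).div_const 2
  have hle : ∀ r, ‖⟪g (r + (m + 1)), b (r + (n + 1))⟫_ℂ‖ ≤
      (s * ‖b (r + (n + 1))‖ ^ 2 + s⁻¹ * W r) / 2 := by
    intro r
    by_cases hr : b (r + (n + 1)) = 0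
    · have := mul_nonneg (inv_nonneg.2 hs.le) (hW0 r)
      rw [hr, inner_zero_right, norm_zero, norm_zero]
      linarith
    · rw [hWg r hr]
      refine (norm_inner_le_norm _ _).trans ?_
      generalize ‖b (r + (n + 1))‖ = y
      generalize ‖g (r + (m + 1))‖ = x
      have : s * y ^ 2 + s⁻¹ * x ^ 2 - 2 * (x * y) = s⁻¹ * (s * y - x) ^ 2 := by
        field_simp; ring
      have h2 : 0 ≤ s⁻¹ * (s * y - x) ^ 2 := by positivity
      linarith
  have hfin := tsum_of_norm_bounded hS.hasSum hle
  rw [← hn1, tsum_div_const, (hB.mul_left s).tsum_add (hW.mul_left s⁻¹), tsum_mul_left,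
    tsum_mul_left] at hfin
  linarith

set_option maxHeartbeats 2000000 in
open Classical in
/-- Main lemma. -/
lemma main_vec {Λ : Set ℕ} (hΛ : HadLac Λ) (b : ℕ → X)
    (hbΛ : ∀ n, b n ≠ 0 → n ∈ Λ) (hb : Summable fun n => ‖b n‖ ^ 2)
    (hinf : ∀ N, ∃ n ≥ N, b n ≠ 0)
    (hK : IsCompact (closure {v : X | ∃ k, b k ≠ 0 ∧ v = ‖b k‖⁻¹ • b k})) :
    ∃ v ∈ closure {v : X | ∃ k, b k ≠ 0 ∧ v = ‖b k‖⁻¹ • b k},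
      ∀ g : ℕ → X, (Summable fun n => ‖g n‖ ^ 2) →
        (∀ n : ℕ, HasSum (fun i => ⟪g i, b (i + n)⟫_ℂ) 0) → ∀ m, ⟪g m, v⟫_ℂ = 0 := by
  set T : ℕ → ℝ := fun n => ∑' k, ‖b (k + n)‖ ^ 2 with hT
  have hTpos : ∀ n, 0 < T n := by
    intro n
    obtain ⟨k, hk, hbk⟩ := hinf n
    refine ((summable_nat_add_iff n).2 hb).tsum_pos (fun _ => by positivity) (k - n) ?_
    rw [Nat.sub_add_cancel hk]
    positivity
  set δ : ℕ → ℝ := fun n => ‖b n‖ ^ 2 / T (n + 1) with hδ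
  have hδ0 : ∀ n, 0 ≤ δ n := fun n => div_nonneg (by positivity) (hTpos _).le
  have hδns : ¬ Summable δ :=
    not_summable_ratio (fun n => ‖b n‖ ^ 2) (fun n => by positivity) hb hTpos
  set u : ℕ → X := fun n => ‖b n‖⁻¹ • b n with hu
  set K := closure {v : X | ∃ k, b k ≠ 0 ∧ v = ‖b k‖⁻¹ • b k} with hKdef
  set p : Set X → Prop := fun s => Summable fun n => if u n ∈ s then δ n else 0 with hp
  have hex : ∃ v ∈ K, ∀ t ∈ nhdsWithin v K, ¬ p t := by
    by_contra! hcon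
    have hmono : ∀ ⦃s t : Set X⦄, s ⊆ t → p t → p s := by
      intro s t hst ht
      refine Summable.of_nonneg_of_le (fun n => ?_) (fun n => ?_) ht
      · split_ifs; exacts [hδ0 n, le_rfl]
      · by_cases h1 : u n ∈ s
        · simp [h1, hst h1]
        · simp only [h1, if_false]; split_ifs; exacts [hδ0 n, le_rfl]
    have := hK.induction_on (p := p) (by simp [hp, summable_zero]) hmono ?_ hcon
    · refine hδns (this.congr fun n => ?_)
      by_cases hn : b n = 0
      · simp [hδ, hn]
      · have : u n ∈ K := subset_closure ⟨n, hn, rfl⟩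
        simp [this]
    · intro s t hs ht
      refine Summable.of_nonneg_of_le (fun n => ?_) (fun n => ?_) (hs.add ht)
      · split_ifs; exacts [hδ0 n, le_rfl]
      · have := hδ0 n
        by_cases h1 : u n ∈ s <;> by_cases h2 : u n ∈ t <;> simp [h1, h2, this]
  obtain ⟨v, hv, hvt⟩ := hex
  refine ⟨v, hv, fun g hg horth m => ?_⟩
  by_contra hne
  obtain ⟨c, hc0, hc⟩ := exists_between (norm_pos_iff.2 hne)
  have hopen : IsOpen {x : X | c < ‖⟪g m, x⟫_ℂ‖} :=
    isOpen_lt continuous_const (by fun_prop)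
  refine hvt _ (mem_nhdsWithin_of_mem_nhds (hopen.mem_nhds hc)) ?_
  have hw : Summable fun r => ‖g (r + (m + 1))‖ ^ 2 := (summable_nat_add_iff (m + 1)).2 hg
  have hE := summable_pairs hΛ _ (fun r => by positivity) hw
  obtain ⟨d, hd, hΛd⟩ := hΛ
  obtain ⟨N, hN⟩ := exists_nat_gt ((m : ℝ) * d / (d - 1))
  rw [div_lt_iff₀ (by linarith)] at hN
  rw [hp]
  refine (summable_nat_add_iff N).1 ?_
  refine Summable.of_nonneg_of_le (fun n => ?_) (fun n => ?_)
    (((summable_nat_add_iff N).2 hE).mul_left (c ^ 2)⁻¹)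
  · split_ifs; exacts [hδ0 _, le_rfl]
  have hnN : N ≤ n + N := by omega
  generalize n + N = n' at hnN ⊢
  have hW0 : ∀ r, (0 : ℝ) ≤ if n' ∈ Λ ∧ n' + (r + 1) ∈ Λ then ‖g (r + (m + 1))‖ ^ 2 else 0 := by
    intro r; split_ifs; exacts [by positivity, le_rfl]
  have hE0 := tsum_nonneg (L := SummationFilter.unconditional ℕ) hW0
  split_ifs with hmem
  swap
  · positivity
  by_cases hn : b n' = 0
  · simp only [hδ, hn]; simp; positivity
  have hWs : Summable fun r => if n' ∈ Λ ∧ n' + (r + 1) ∈ Λ then ‖g (r + (m + 1))‖ ^ 2 else 0 := by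
    refine Summable.of_nonneg_of_le hW0 (fun r => ?_) hw
    split_ifs; exacts [le_rfl, by positivity]
  have hbn : 0 < ‖b n'‖ := norm_pos_iff.2 hn
  have hcb : c * ‖b n'‖ < ‖⟪g m, b n'⟫_ℂ‖ := by
    have h1 : c < ‖⟪g m, u n'⟫_ℂ‖ := hmem
    have h2 : b n' = (‖b n'‖ : ℂ) • u n' := by
      simp only [hu]
      rw [← Complex.coe_smul, smul_smul]
      rw [Complex.ofReal_inv, mul_inv_cancel₀ (by exact_mod_cast hbn.ne'), one_smul]
    have h3 : ‖⟪g m, b n'⟫_ℂ‖ = ‖b n'‖ * ‖⟪g m, u n'⟫_ℂ‖ := by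
      conv_lhs => rw [h2]
      rw [inner_smul_right, norm_mul]; simp
    rw [h3]; nlinarith
  have hT1 := hTpos (n' + 1)
  have hmain := pairing_estimate hd hΛd b g hbΛ hb hg horth m n' hn
    (lt_of_lt_of_le hN (mul_le_mul_of_nonneg_right (by exact_mod_cast hnN) (by linarith)))
    (c * ‖b n'‖ / T (n' + 1)) (by positivity) _ hWs (fun r hr => by
      have h1 := hbΛ _ hr
      rw [show r + (n' + 1) = n' + (r + 1) by omega] at h1
      rw [if_pos ⟨hbΛ _ hn, h1⟩]) hW0
  change _ ≤ c * ‖b n'‖ / T (n' + 1) * T (n' + 1) + _ at hmain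
  generalize (∑' r, if n' ∈ Λ ∧ n' + (r + 1) ∈ Λ then ‖g (r + (m + 1))‖ ^ 2 else 0) = E at *
  rw [div_mul_cancel₀ _ hT1.ne', inv_div] at hmain
  have h1 : c * ‖b n'‖ ≤ T (n' + 1) / (c * ‖b n'‖) * E := by linarith
  rw [div_mul_eq_mul_div, le_div_iff₀ (by positivity)] at h1
  rw [hδ]
  simp only
  rw [div_le_iff₀ hT1, inv_mul_eq_div, div_mul_eq_mul_div, le_div_iff₀ (by positivity)]
  linarith

lemma bshift_iter (f : H2 X) (n k : ℕ) : (bshift^[n] f) k = f (k + n) := by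
  induction n generalizing f with
  | zero => rfl
  | succ n ih =>
    rw [Function.iterate_succ_apply, ih]
    change f (k + n + 1) = _
    rfl

lemma bshift_mem (f : H2 X) (n : ℕ) : bshift^[n] f ∈ Ef f :=
  Submodule.le_topologicalClosure _ (Submodule.subset_span ⟨f, rfl, n, rfl⟩)

lemma Ef_le {f : H2 X} {M : Submodule ℂ (H2 X)} (hM : IsClosed (M : Set (H2 X)))
    (h : ∀ n, bshift^[n] f ∈ M) : Ef f ≤ M := by
  refine Submodule.topologicalClosure_minimal _ (Submodule.span_le.2 ?_) hM
  rintro _ ⟨g, rfl, n, rfl⟩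
  exact h n

lemma H2_summable (f : H2 X) : Summable fun n => ‖f n‖ ^ 2 := by
  have h : Summable fun n : ℕ => ‖f n‖ ^ (2 : ℝ≥0∞).toReal :=
    (memℓp_gen_iff (by norm_num)).1 (lp.memℓp f)
  simpa using h

lemma H2_inner_zero (f g : H2 X) (h : ∀ n, ⟪f n, g n⟫_ℂ = 0) : ⟪f, g⟫_ℂ = 0 := by
  rw [lp.inner_eq_tsum]; simp [h]

lemma isOrthoProj_star (K : Submodule ℂ X) [K.HasOrthogonalProjection] :
    IsOrthoProj K.starProjection :=
  ⟨fun x => Submodule.starProjection_eq_self_iff.2 (K.starProjection_apply_mem x),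
    fun x y => K.inner_starProjection_left_eq_right x y⟩

lemma norm_of_mem_closure (b : ℕ → X) {v : X}
    (hv : v ∈ closure {v : X | ∃ k, b k ≠ 0 ∧ v = ‖b k‖⁻¹ • b k}) : ‖v‖ = 1 := by
  have hcl : IsClosed {v : X | ‖v‖ = 1} := isClosed_eq continuous_norm continuous_const
  refine closure_minimal ?_ hcl hv
  rintro _ ⟨k, hk, rfl⟩
  have : ‖b k‖ ≠ 0 := norm_ne_zero_iff.2 hk
  simp [norm_smul, this]

lemma mem_of_mem_closure (b : ℕ → X) (M : Submodule ℂ X) (hM : IsClosed (M : Set X))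
    (hb : ∀ k, b k ∈ M) {v : X}
    (hv : v ∈ closure {v : X | ∃ k, b k ≠ 0 ∧ v = ‖b k‖⁻¹ • b k}) : v ∈ M := by
  refine closure_minimal ?_ hM hv
  rintro _ ⟨k, hk, rfl⟩
  rw [← Complex.coe_smul]
  exact M.smul_mem _ (hb k)

lemma Xstar_closed (f : H2 X) : IsClosed (Xstar f : Set X) := by
  unfold Xstar XstarF
  rw [Submodule.coe_iInf]
  exact isClosed_iInter fun m => Submodule.isClosed_topologicalClosure _

lemma Xstar_le (f : H2 X) (m : ℕ) (M : Submodule ℂ X) (hM : IsClosed (M : Set X))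
    (h : ∀ k ≥ m, f k ∈ M) : Xstar f ≤ M := by
  refine (iInf_le _ m).trans (Submodule.topologicalClosure_minimal _ (Submodule.span_le.2 ?_) hM)
  rintro _ ⟨g, rfl, k, hk, rfl⟩
  exact h k hk

/-- `H²(X_*(f)) ⊆ E_f`. -/
lemma H2sub_le [CompleteSpace X] (f : H2 X) (hlac : HadLac (spec f))
    (hcrc : CRC fun k : ℕ => f k) : H2sub (Xstar f) ≤ Ef f := by
  set V : Submodule ℂ X := Submodule.span ℂ {x | ∃ g ∈ (Ef f)ᗮ, ∃ m : ℕ, x = g m} with hV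
  have hVmem : ∀ g ∈ (Ef f)ᗮ, ∀ m : ℕ, g m ∈ V := fun g hg m => Submodule.subset_span ⟨g, hg, m, rfl⟩
  have hle : Xstar f ≤ Vᗮ := by
    set Q := Vᗮᗮ.starProjection with hQ
    by_cases hfin : ∃ N, ∀ k ≥ N, Q (f k) = 0
    · obtain ⟨N, hN⟩ := hfin
      refine Xstar_le f N _ (Submodule.isClosed_orthogonal _) fun k hk => ?_
      have := (Submodule.starProjection_apply_eq_zero_iff _).1 (hN k hk)
      rwa [Submodule.orthogonal_orthogonal] at this
    · exfalso
      push Not at hfin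
      obtain ⟨v, hv, hvg⟩ := main_vec hlac (fun k => Q (f k))
        (fun n hn h0 => hn (by simp [h0]))
        (Summable.of_nonneg_of_le (fun _ => by positivity)
          (fun k => pow_le_pow_left₀ (norm_nonneg _)
            (Submodule.norm_starProjection_apply_le _ _) 2) (H2_summable f))
        hfin (hcrc Q (isOrthoProj_star _))
      have h1 := norm_of_mem_closure _ hv
      have h2 := mem_of_mem_closure _ Vᗮᗮ (Submodule.isClosed_orthogonal _)
        (fun k => Submodule.starProjection_apply_mem _ _) hv
      have h3 : v ∈ Vᗮ := by
        have : V ≤ (ℂ ∙ v)ᗮ := by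
          refine Submodule.span_le.2 ?_
          rintro _ ⟨g, hg, m, rfl⟩
          refine Submodule.mem_orthogonal_singleton_iff_inner_left.2 ?_
          refine hvg g (H2_summable g) (fun n => ?_) m
          have h4 := lp.hasSum_inner (𝕜 := ℂ) g (bshift^[n] f)
          rw [Submodule.inner_left_of_mem_orthogonal (bshift_mem f n) hg] at h4
          refine h4.congr_fun ?_
          intro i
          rw [bshift_iter, ← Submodule.inner_starProjection_left_eq_right,
            Submodule.starProjection_eq_self_iff.2
              (Submodule.le_orthogonal_orthogonal V (hVmem g hg i))]
        rw [Submodule.mem_orthogonal]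
        intro w hw
        exact Submodule.mem_orthogonal_singleton_iff_inner_left.1 (this hw)
      have h5 : ⟪v, v⟫_ℂ = 0 := Submodule.inner_right_of_mem_orthogonal h3 h2
      rw [inner_self_eq_zero] at h5
      rw [h5] at h1
      simp at h1
  intro h hh
  have hcl : (Ef f)ᗮᗮ = Ef f := by
    rw [Submodule.orthogonal_orthogonal_eq_closure]
    exact (Submodule.isClosed_topologicalClosure _).submodule_topologicalClosure_eq
  rw [← hcl, Submodule.mem_orthogonal]
  intro g hg
  exact H2_inner_zero _ _ fun n =>
    Submodule.inner_right_of_mem_orthogonal (hVmem g hg n) (hle (hh n))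

lemma H2sub_closed (Y : Submodule ℂ X) (hY : IsClosed (Y : Set X)) :
    IsClosed (H2sub Y : Set (H2 X)) := by
  have : (H2sub Y : Set (H2 X)) = ⋂ n : ℕ, (fun g : H2 X => g n) ⁻¹' (Y : Set X) := by
    ext g; simp [H2sub]
  rw [this]
  refine isClosed_iInter fun n => hY.preimage ?_
  have h1 : Continuous fun g : H2 X => (g : ∀ _ : ℕ, X) :=
    (lp.uniformContinuous_coe (E := fun _ : ℕ => X) (p := 2)).continuous
  exact (continuous_apply n).comp h1

/-- The coefficients in `X_*(f)ᗮ` vanish eventually. -/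
lemma poly_aux [CompleteSpace X] (f : H2 X) (hcrc : CRC fun k : ℕ => f k)
    [(Xstar f).HasOrthogonalProjection] :
    {n : ℕ | (Xstar f)ᗮ.starProjection (f n) ≠ 0}.Finite := by
  by_contra hinf
  set Q := (Xstar f)ᗮ.starProjection with hQ
  have hinf' : {n : ℕ | Q (f n) ≠ 0}.Infinite := hinf
  have hK := hcrc Q (isOrthoProj_star _)
  set a : ℕ → ℕ := Nat.nth fun n => Q (f n) ≠ 0 with ha
  have hamem : ∀ n, Q (f (a n)) ≠ 0 := fun n => Nat.nth_mem_of_infinite hinf' n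
  have hamono : StrictMono a := Nat.nth_strictMono hinf'
  obtain ⟨v, hv, φ, hφ, hlim⟩ := hK.tendsto_subseq
    (x := fun n => ‖Q (f (a n))‖⁻¹ • Q (f (a n)))
    (fun n => subset_closure ⟨a n, hamem n, rfl⟩)
  have h1 := norm_of_mem_closure _ hv
  have h2 := mem_of_mem_closure _ (Xstar f)ᗮ (Submodule.isClosed_orthogonal _)
    (fun k => Submodule.starProjection_apply_mem _ _) hv
  have h3 : v ∈ Xstar f := by
    unfold Xstar XstarF
    rw [Submodule.mem_iInf]
    intro m
    refine (Submodule.isClosed_topologicalClosure _).mem_of_tendsto hlim ?_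
    filter_upwards [Filter.eventually_ge_atTop m] with n hn
    have hnm : m ≤ a (φ n) := hn.trans ((hφ.id_le n).trans (hamono.id_le _))
    simp only [Function.comp]
    rw [← Complex.coe_smul]
    refine Submodule.smul_mem _ _ ?_
    have hsub : Q (f (a (φ n))) = f (a (φ n)) - (Xstar f).starProjection (f (a (φ n))) := by
      rw [eq_sub_iff_add_eq', hQ, Submodule.starProjection_add_starProjection_orthogonal]
    rw [hsub]
    refine Submodule.sub_mem _ ?_ ?_
    · exact Submodule.le_topologicalClosure _ (Submodule.subset_span ⟨f, rfl, _, hnm, rfl⟩)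
    · have h4 := (Xstar f).starProjection_apply_mem (f (a (φ n)))
      have h5 : Xstar f ≤ _ := iInf_le (fun m : ℕ => (Submodule.span ℂ
        {x : X | ∃ g ∈ ({f} : Set (H2 X)), ∃ k ≥ m, x = g k}).topologicalClosure) m
      exact h5 h4
  have h5 : ⟪v, v⟫_ℂ = 0 := Submodule.inner_right_of_mem_orthogonal h3 h2
  rw [inner_self_eq_zero] at h5
  rw [h5] at h1
  simp at h1

/-- A lacunary series `f ∈ H²(𝔻, X)` with completely relatively compact coefficient sequence
generates the `S*`-invariant subspace `E_f = H²(𝔻, X_*(f)) ⊕ E_p`, an orthogonal direct sum,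
where `p = f − P_{H²(𝔻, X_*(f))} f` is a polynomial. -/
theorem Ef_eq_H2sub_Xstar_sup_Ef_poly {X : Type*} [NormedAddCommGroup X] [InnerProductSpace ℂ X] [CompleteSpace X]
    [TopologicalSpace.SeparableSpace X]
    (f : H2 X) (hlac : HadLac (spec f)) (hcrc : CRC fun k : ℕ => f k) :
    ∃ p : H2 X,
      f - p ∈ H2sub (Xstar f) ∧
      (∀ g ∈ H2sub (Xstar f), ⟪p, g⟫_ℂ = 0) ∧
      PolyH2 p ∧
      Ef f = H2sub (Xstar f) ⊔ Ef p ∧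
      ∀ g ∈ H2sub (Xstar f), ∀ h ∈ Ef p, ⟪g, h⟫_ℂ = 0 := by
  have hYc := Xstar_closed f
  haveI : CompleteSpace (Xstar f) := hYc.completeSpace_coe
  have hMc := H2sub_closed (Xstar f) hYc
  haveI : CompleteSpace (H2sub (Xstar f)) := hMc.completeSpace_coe
  have hsub := H2sub_le f hlac hcrc
  let Q := (Xstar f)ᗮ.starProjection
  have hpm : Memℓp (fun n => Q (f n)) 2 := by
    refine memℓp_gen ?_
    refine Summable.of_nonneg_of_le (fun _ => by positivity) (fun k => ?_)
      ((memℓp_gen_iff (by norm_num)).1 (lp.memℓp f))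
    exact Real.rpow_le_rpow (norm_nonneg _) (Submodule.norm_starProjection_apply_le _ _)
      (by norm_num)
  let p : H2 X := ⟨fun n => Q (f n), hpm⟩
  have hp : ∀ n, p n = Q (f n) := fun n => rfl
  have hpY : ∀ n, p n ∈ (Xstar f)ᗮ := fun n => Submodule.starProjection_apply_mem _ _
  have hfp : ∀ n, f n - p n ∈ Xstar f := by
    intro n
    have h1 := Submodule.starProjection_add_starProjection_orthogonal (K := Xstar f) (f n)
    have h2 : f n - p n = (Xstar f).starProjection (f n) := by
      rw [hp, sub_eq_iff_eq_add]; exact h1.symm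
    rw [h2]; exact Submodule.starProjection_apply_mem _ _
  have hfpn : ∀ n, bshift^[n] f - bshift^[n] p ∈ H2sub (Xstar f) := by
    intro n k
    rw [lp.coeFn_sub, Pi.sub_apply, bshift_iter, bshift_iter]
    exact hfp _
  have hpn : ∀ n, bshift^[n] p ∈ (H2sub (Xstar f))ᗮ := by
    intro n
    rw [Submodule.mem_orthogonal]
    intro g hg
    refine H2_inner_zero _ _ fun k => ?_
    rw [bshift_iter]
    exact Submodule.inner_right_of_mem_orthogonal (hg k) (hpY _)
  have hEp : Ef p ≤ (H2sub (Xstar f))ᗮ := Ef_le (Submodule.isClosed_orthogonal _) hpn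
  refine ⟨p, hfpn 0, fun g hg => Submodule.inner_left_of_mem_orthogonal hg (hpn 0),
    poly_aux f hcrc, le_antisymm ?_ (sup_le hsub ?_),
    fun g hg h hh => Submodule.inner_right_of_mem_orthogonal hg (hEp hh)⟩
  · have h1 : Ef f ≤ (Ef p).comap ((H2sub (Xstar f))ᗮ.starProjection : H2 X →ₗ[ℂ] H2 X) := by
      refine Ef_le ?_ fun n => ?_
      · have hc : IsClosed (Ef p : Set (H2 X)) := Submodule.isClosed_topologicalClosure _
        exact hc.preimage (H2sub (Xstar f))ᗮ.starProjection.continuous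
      · have h2 : (H2sub (Xstar f))ᗮ.starProjection (bshift^[n] f) = bshift^[n] p := by
          have h3 : bshift^[n] f = (bshift^[n] f - bshift^[n] p) + bshift^[n] p := by abel
          rw [h3, map_add, Submodule.starProjection_eq_self_iff.2 (hpn n),
            (Submodule.starProjection_apply_eq_zero_iff _).2
              (Submodule.le_orthogonal_orthogonal _ (hfpn n)), zero_add]
        change (H2sub (Xstar f))ᗮ.starProjection (bshift^[n] f) ∈ Ef p
        rw [h2]
        exact bshift_mem p n
    intro h hh
    rw [← Submodule.starProjection_add_starProjection_orthogonal (K := H2sub (Xstar f)) h]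
    exact Submodule.add_mem_sup (Submodule.starProjection_apply_mem _ _) (h1 hh)
  · refine Ef_le (Submodule.isClosed_topologicalClosure _) fun n => ?_
    have h3 : bshift^[n] p = bshift^[n] f - (bshift^[n] f - bshift^[n] p) := by abel
    rw [h3]
    exact Submodule.sub_mem _ (bshift_mem f n) (hsub (hfpn n))

end
end

section
/- Let X be a separable Hilbert space, Λ ⊂ ℕ an infinite Hadamard lacunary set, and f ∈ H²_Λ(𝔻, X) such that (f̂(k))_{k≥0} is completely relatively compact in X. Then f is cyclic for the backward shift in H²(𝔻, X) if and only if X_*(f) = X. -/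
open scoped InnerProductSpace ENNReal
noncomputable section

variable {X : Type*} [NormedAddCommGroup X] [InnerProductSpace ℂ X]

lemma aux_diverge (c : ℕ → ℝ) (hc : ∀ n, 0 ≤ c n) (hs : Summable c)
    (hinf : ∀ m, ∃ k ≥ m, c k ≠ 0) :
    ¬ Summable (fun n => c n / ∑' m, c (n + 1 + m)) := by
  intro hsum
  set T : ℕ → ℝ := fun n => ∑' m, c (n + 1 + m) with hT
  have hsh : ∀ n, Summable (fun m => c (n + 1 + m)) := fun n => by
    have := (summable_nat_add_iff (n + 1)).2 hs
    simpa [add_comm, add_left_comm] using this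
  have hpos : ∀ n, 0 < T n := by
    intro n
    obtain ⟨k, hk, hk0⟩ := hinf (n + 1)
    refine (hsh n).tsum_pos (fun m => hc _) (k - (n + 1)) ?_
    rw [Nat.add_sub_cancel' hk]
    exact lt_of_le_of_ne (hc k) (Ne.symm hk0)
  have hrec : ∀ n, T n = c (n + 1) + T (n + 1) := by
    intro n
    have h := (hsh n).tsum_eq_zero_add
    simp only [hT]
    rw [h]
    congr 1
    apply tsum_congr
    intro b
    congr 1
    omega
  have hlim : Filter.Tendsto T Filter.atTop (nhds 0) := by
    have h1 := tendsto_sum_nat_add c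
    have h2 := (Filter.tendsto_add_atTop_iff_nat 1).2 h1
    refine h2.congr fun n => ?_
    simp only [hT]
    apply tsum_congr
    intro b
    congr 1
    omega
  set S := ∑' n, c n / T n with hS
  have hlog : ∀ n, Real.log (T 0) - Real.log (T n) ≤ ∑ i ∈ Finset.range n, c (i + 1) / T (i + 1) := by
    intro n
    induction n with
    | zero => simp
    | succ n ih =>
      rw [Finset.sum_range_succ]
      have h1 : Real.log (T n / T (n + 1)) ≤ T n / T (n + 1) - 1 :=
        Real.log_le_sub_one_of_pos (div_pos (hpos _) (hpos _))
      rw [Real.log_div (hpos _).ne' (hpos _).ne'] at h1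
      have h2 : T n / T (n + 1) - 1 = c (n + 1) / T (n + 1) := by
        have := (hpos (n + 1)).ne'
        rw [hrec n]
        field_simp
        ring
      linarith
  have hnn : ∀ n, 0 ≤ c n / T n := fun n => div_nonneg (hc n) (hpos n).le
  have hsum1 : Summable (fun i => c (i + 1) / T (i + 1)) := (summable_nat_add_iff 1).2 hsum
  have hbd : ∀ n, T 0 * Real.exp (-(∑' i, c (i + 1) / T (i + 1))) ≤ T n := by
    intro n
    have h1 := hlog n
    have h2 := hsum1.sum_le_tsum (Finset.range n) (fun i _ => hnn (i + 1))
    rw [← Real.exp_log (hpos 0), ← Real.exp_add, ← Real.exp_log (hpos n), Real.exp_le_exp]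
    linarith
  have := ge_of_tendsto' hlim hbd
  have h3 := mul_pos (hpos 0) (Real.exp_pos (-(∑' i, c (i + 1) / T (i + 1))))
  linarith

lemma aux_card_pow (Λ : Set ℕ) (d : ℝ) (hd : 1 < d)
    (h : ∀ m ∈ Λ, ∀ n ∈ Λ, m < n → d * m ≤ n) (m : ℕ) (s : Finset ℕ) :
    (∀ x ∈ s, x ∈ Λ ∧ m ≤ x) → s.Nonempty → ∃ x ∈ s, d ^ (s.card - 1) * m ≤ x := by
  induction s using Finset.induction_on_max with
  | empty => intro _ h; simp at h
  | insert a s hmax ih =>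
    intro hs _
    have ha : a ∉ s := fun h => lt_irrefl _ (hmax a h)
    refine ⟨a, Finset.mem_insert_self _ _, ?_⟩
    rw [Finset.card_insert_of_notMem ha, Nat.add_sub_cancel]
    rcases s.eq_empty_or_nonempty with rfl | hne
    · simpa using (hs a (Finset.mem_insert_self _ _)).2
    · obtain ⟨x, hx, hxd⟩ := ih (fun x hx => hs x (Finset.mem_insert_of_mem hx)) hne
      have h1 := h x (hs x (Finset.mem_insert_of_mem hx)).1 a
        (hs a (Finset.mem_insert_self _ _)).1 (hmax x hx)
      have hc : s.card = s.card - 1 + 1 := by have := hne.card_pos; omega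
      rw [hc, pow_succ]
      have : d * (d ^ (s.card - 1) * m) ≤ d * x := by gcongr
      linarith

lemma aux_card (Λ : Set ℕ) (hΛ : HadLac Λ) : ∃ C : ℕ, ∀ (m : ℕ) (s : Finset ℕ),
    (∀ n ∈ s, n ∈ Λ ∧ n + 1 + m ∈ Λ) → s.card ≤ C := by
  obtain ⟨d, hd, h⟩ := hΛ
  obtain ⟨C, hC⟩ := pow_unbounded_of_one_lt (1 + 1 / (d - 1)) hd
  refine ⟨C, fun m s hs => ?_⟩
  by_contra hlt
  push Not at hlt
  have hd1 : 0 < d - 1 := by linarith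
  have hinj : Function.Injective (fun n : ℕ => n + 1 + m) := fun a b hab => by
    simp only at hab; omega
  have hcard : (s.image (fun n => n + 1 + m)).card = s.card :=
    Finset.card_image_of_injective _ hinj
  have hne : s.Nonempty := Finset.card_pos.1 (by omega)
  obtain ⟨x, hx, hxd⟩ := aux_card_pow Λ d hd h (m + 1) (s.image (fun n => n + 1 + m)) (by
    intro x hx
    obtain ⟨n, hn, rfl⟩ := Finset.mem_image.1 hx
    exact ⟨(hs n hn).2, by omega⟩) (hne.image _)
  rw [hcard] at hxd
  obtain ⟨n, hn, rfl⟩ := Finset.mem_image.1 hx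
  have h1 := h n (hs n hn).1 _ (hs n hn).2 (by omega)
  have h2 : d ^ C ≤ d ^ (s.card - 1) := pow_le_pow_right₀ hd.le (by omega)
  push_cast at hxd h1
  have hm : (0 : ℝ) < m + 1 := by positivity
  have h3 : (1 + 1 / (d - 1)) * ((m : ℝ) + 1) < n + 1 + m := by
    calc (1 + 1 / (d - 1)) * ((m : ℝ) + 1) < d ^ C * (m + 1) := by gcongr
      _ ≤ d ^ (s.card - 1) * (m + 1) := by gcongr
      _ ≤ _ := hxd
  have h4 : ((m : ℝ) + 1) / (d - 1) < n := by
    have : (1 + 1 / (d - 1)) * ((m : ℝ) + 1) = (m + 1) + (m + 1) / (d - 1) := by ring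
    linarith
  rw [div_lt_iff₀ hd1] at h4
  linarith

open Classical in
lemma aux_summable (Λ : Set ℕ) (hΛ : HadLac Λ) (h : ℕ → ℝ) (h0 : ∀ n, 0 ≤ h n)
    (hs : Summable h) :
    Summable (fun n => ∑' m, if n ∈ Λ ∧ n + 1 + m ∈ Λ then h m else 0) := by
  obtain ⟨C, hC⟩ := aux_card Λ hΛ
  have hfin : ∀ m, {n | n ∈ Λ ∧ n + 1 + m ∈ Λ}.Finite := by
    intro m
    by_contra hinf
    obtain ⟨s, hs, hcard⟩ := Set.Infinite.exists_subset_card_eq hinf (C + 1)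
    have := hC m s (fun n hn => hs hn)
    omega
  have hsupp : ∀ m, ∀ n ∉ (hfin m).toFinset, (if n ∈ Λ ∧ n + 1 + m ∈ Λ then h m else 0) = 0 := by
    intro m n hn
    rw [if_neg]
    simpa using hn
  have key : Summable (fun p : ℕ × ℕ => if p.2 ∈ Λ ∧ p.2 + 1 + p.1 ∈ Λ then h p.1 else 0) := by
    rw [summable_prod_of_nonneg]
    · refine ⟨fun m => summable_of_ne_finset_zero (s := (hfin m).toFinset) (hsupp m), ?_⟩
      refine Summable.of_nonneg_of_le (fun m => tsum_nonneg fun n => ?_) (fun m => ?_)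
        (hs.mul_left (C : ℝ))
      · dsimp only; split_ifs; exacts [h0 m, le_rfl]
      · dsimp only
        rw [tsum_eq_sum (s := (hfin m).toFinset) (hsupp m)]
        calc _ ≤ ∑ n ∈ (hfin m).toFinset, h m := by
              apply Finset.sum_le_sum
              intro n _
              split_ifs; exacts [le_rfl, h0 m]
          _ = (hfin m).toFinset.card * h m := by simp
          _ ≤ C * h m := by
              gcongr
              · exact h0 m
              · exact hC m _ (fun n hn => by simpa using hn)
    · intro p
      dsimp only [Pi.zero_apply]; split_ifs; exacts [h0 _, le_rfl]
  exact (key.prod_symm).prod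

lemma aux_cs (a b : ℕ → ℝ) (ha0 : ∀ n, 0 ≤ a n) (hb0 : ∀ n, 0 ≤ b n)
    (ha : Summable (fun n => a n ^ 2))
    (hb : Summable (fun n => b n ^ 2)) :
    Summable (fun n => a n * b n) ∧
    (∑' n, a n * b n) ^ 2 ≤ (∑' n, a n ^ 2) * ∑' n, b n ^ 2 := by
  have hsm : Summable (fun n => a n * b n) := by
    refine Summable.of_nonneg_of_le (fun n => mul_nonneg (ha0 n) (hb0 n)) (fun n => ?_) (ha.add hb)
    nlinarith [sq_nonneg (a n - b n), sq_nonneg (a n), sq_nonneg (b n)]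
  refine ⟨hsm, ?_⟩
  have hA : 0 ≤ ∑' n, a n ^ 2 := tsum_nonneg fun n => sq_nonneg _
  have hB : 0 ≤ ∑' n, b n ^ 2 := tsum_nonneg fun n => sq_nonneg _
  have : (∑' n, a n * b n) ≤ Real.sqrt ((∑' n, a n ^ 2) * ∑' n, b n ^ 2) := by
    refine hsm.tsum_le_of_sum_le fun s => Real.le_sqrt_of_sq_le ?_
    refine (Finset.sum_mul_sq_le_sq_mul_sq s a b).trans ?_
    exact mul_le_mul (ha.sum_le_tsum s fun _ _ => sq_nonneg _) (hb.sum_le_tsum s fun _ _ => sq_nonneg _)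
      (Finset.sum_nonneg fun _ _ => sq_nonneg _) hA
  calc _ ≤ (Real.sqrt ((∑' n, a n ^ 2) * ∑' n, b n ^ 2)) ^ 2 := by
        gcongr
        exact tsum_nonneg fun n => mul_nonneg (ha0 n) (hb0 n)
    _ = _ := Real.sq_sqrt (mul_nonneg hA hB)

open Classical in
lemma aux_ineq (Λ : Set ℕ) (hΛ : HadLac Λ) (g q : ℕ → X)
    (hg : Summable (fun n => ‖g n‖ ^ 2)) (hq : Summable (fun n => ‖q n‖ ^ 2))
    (hsupp : ∀ n, n ∉ Λ → q n = 0) (horth : ∀ n, ∑' i, ⟪g i, q (i + n)⟫_ℂ = 0) (j : ℕ) :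
    ∃ N, ∀ n ≥ N, n ∈ Λ → ‖⟪g j, q n⟫_ℂ‖ ^ 2 ≤
      (∑' m, if n ∈ Λ ∧ n + 1 + m ∈ Λ then ‖g (j + 1 + m)‖ ^ 2 else 0) *
        ∑' m, ‖q (n + 1 + m)‖ ^ 2 := by
  obtain ⟨d, hd, h⟩ := hΛ
  obtain ⟨N, hN⟩ := exists_nat_gt (d * j / (d - 1))
  refine ⟨N + j, fun n hn hnΛ => ?_⟩
  have hz : ∀ i < j, q (i + (n - j)) = 0 := by
    intro i hi
    apply hsupp
    intro hmem
    have h1 := h _ hmem n hnΛ (by omega)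
    have h2 : ((n : ℝ) - j) ≤ ((i + (n - j) : ℕ) : ℝ) := by
      have : n ≤ i + (n - j) + j := by omega
      have : (n : ℝ) ≤ ((i + (n - j) : ℕ) : ℝ) + j := by exact_mod_cast this
      linarith
    have h3 : d * ((n : ℝ) - j) ≤ n := (mul_le_mul_of_nonneg_left h2 (by linarith)).trans h1
    have h4 : (N : ℝ) ≤ n := by exact_mod_cast (by omega : N ≤ n)
    rw [div_lt_iff₀ (by linarith)] at hN
    nlinarith
  have hgs : Summable (fun m => ‖g (j + 1 + m)‖ ^ 2) := by
    have := (summable_nat_add_iff (j + 1)).2 hg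
    simpa [add_comm, add_left_comm] using this
  have hqs : ∀ k, Summable (fun m => ‖q (m + k)‖ ^ 2) := fun k => (summable_nat_add_iff k).2 hq
  have hqs' : Summable (fun m => ‖q (n + 1 + m)‖ ^ 2) := by
    simpa [add_comm, add_left_comm] using hqs (n + 1)
  have hsumm : Summable (fun i => ⟪g i, q (i + (n - j))⟫_ℂ) := by
    refine Summable.of_norm_bounded (aux_cs (fun i => ‖g i‖) (fun i => ‖q (i + (n - j))‖)
      (fun _ => norm_nonneg _) (fun _ => norm_nonneg _) hg (hqs _)).1 fun i => norm_inner_le_norm _ _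
  have heq : ⟪g j, q n⟫_ℂ = - ∑' m, ⟪g (j + 1 + m), q (n + 1 + m)⟫_ℂ := by
    have h1 := hsumm.sum_add_tsum_nat_add (j + 1)
    rw [horth, Finset.sum_range_succ, Finset.sum_eq_zero (fun i hi => by
      rw [hz i (Finset.mem_range.1 hi), inner_zero_right]), zero_add] at h1
    rw [Nat.add_sub_cancel' (by omega : j ≤ n)] at h1
    rw [eq_neg_of_add_eq_zero_left h1]
    congr 1
    apply tsum_congr
    intro m
    congr 2 <;> omega
  set a : ℕ → ℝ := fun m => if n ∈ Λ ∧ n + 1 + m ∈ Λ then ‖g (j + 1 + m)‖ else 0 with ha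
  have ha2 : ∀ m, a m ^ 2 = if n ∈ Λ ∧ n + 1 + m ∈ Λ then ‖g (j + 1 + m)‖ ^ 2 else 0 := by
    intro m; simp only [ha]; split_ifs <;> simp
  have ha0 : ∀ m, 0 ≤ a m := by
    intro m; simp only [ha]; split_ifs <;> simp
  have has : Summable (fun m => a m ^ 2) := by
    refine Summable.of_nonneg_of_le (fun m => sq_nonneg _) (fun m => ?_) hgs
    rw [ha2]; split_ifs
    · exact le_rfl
    · positivity
  obtain ⟨hs1, hs2⟩ := aux_cs a (fun m => ‖q (n + 1 + m)‖) ha0 (fun _ => norm_nonneg _) has hqs'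
  simp only [ha2] at hs2
  refine le_trans ?_ hs2
  have : ‖⟪g j, q n⟫_ℂ‖ ≤ ∑' m, a m * ‖q (n + 1 + m)‖ := by
    rw [heq, norm_neg]
    refine tsum_of_norm_bounded hs1.hasSum fun m => ?_
    by_cases hm : n + 1 + m ∈ Λ
    · simp only [ha, hnΛ, hm, and_self, if_true]
      exact norm_inner_le_norm _ _
    · rw [hsupp _ hm]; simp
  gcongr

lemma aux_l2 (f : H2 X) : Summable (fun n => ‖f n‖ ^ 2) := by
  have h : Summable fun n : ℕ => ‖f n‖ ^ (2 : ℝ≥0∞).toReal :=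
    (memℓp_gen_iff (by norm_num)).1 (lp.memℓp f)
  simpa using h

lemma aux_forward (f : H2 X) (h : Ef f = ⊤) : Xstar f = ⊤ := by
  rw [Xstar, XstarF, iInf_eq_top]
  intro m
  rw [eq_top_iff]
  intro x _
  set K := (Submodule.span ℂ {x : X | ∃ f' ∈ ({f} : Set (H2 X)), ∃ k ≥ m, x = f' k}).topologicalClosure
    with hK
  have hx : (lp.single 2 m x : H2 X) ∈ Ef f := by rw [h]; trivial
  have hle : Ef f ≤ K.comap (lp.evalCLM ℂ (fun _ : ℕ => X) 2 m : H2 X →ₗ[ℂ] X) := by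
    refine Submodule.topologicalClosure_minimal _ ?_ ?_
    · rw [Submodule.span_le]
      rintro _ ⟨f', hf', n, rfl⟩
      refine Submodule.le_topologicalClosure _ (Submodule.subset_span ⟨f', hf', m + n, by omega, ?_⟩)
      exact bshift_iter f' n m
    · exact (Submodule.isClosed_topologicalClosure _).preimage
        (lp.evalCLM ℂ (fun _ : ℕ => X) 2 m).continuous
  have := hle hx
  have h2 : (lp.single 2 m x : H2 X) m ∈ K := this
  rwa [lp.single_apply_self] at h2

lemma aux_backward [CompleteSpace X] (Λ : Set ℕ) (hΛ : HadLac Λ)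
    (f : H2 X) (hspec : spec f ⊆ Λ) (hcrc : CRC fun k : ℕ => f k) (hX : Xstar f = ⊤) :
    Ef f = ⊤ := by
  classical
  rw [Ef, EF, Submodule.topologicalClosure_eq_top_iff, eq_bot_iff]
  intro g hg
  rw [Submodule.mem_orthogonal'] at hg
  have horth : ∀ n, ∑' i, ⟪g i, f (i + n)⟫_ℂ = 0 := by
    intro n
    have := hg (bshift^[n] f) (Submodule.subset_span ⟨f, rfl, n, rfl⟩)
    rw [lp.inner_eq_tsum] at this
    simpa only [bshift_iter] using this
  by_contra hg0
  set Y : Submodule ℂ X := (Submodule.span ℂ (Set.range fun j => g j)).topologicalClosure with hY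
  have hYc : IsClosed (Y : Set X) := Submodule.isClosed_topologicalClosure _
  haveI : CompleteSpace Y := hYc.completeSpace_coe
  have hgY : ∀ j, g j ∈ Y := fun j =>
    Submodule.le_topologicalClosure _ (Submodule.subset_span ⟨j, rfl⟩)
  set P : X →L[ℂ] X := Y.starProjection with hP
  have hPY : ∀ x, P x ∈ Y := fun x => Y.starProjection_apply_mem x
  have hPg : ∀ y ∈ Y, P y = y := fun y hy => Submodule.starProjection_eq_self_iff.2 hy
  have hPs : ∀ x y, ⟪P x, y⟫_ℂ = ⟪x, P y⟫_ℂ := fun x y =>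
    Submodule.inner_starProjection_left_eq_right Y x y
  have hproj : IsOrthoProj P := ⟨fun x => hPg _ (hPY x), hPs⟩
  have hcpt := hcrc P hproj
  set q : ℕ → X := fun n => P (f n) with hq
  have hgq : ∀ j n, ⟪g j, q n⟫_ℂ = ⟪g j, f n⟫_ℂ := by
    intro j n
    rw [hq, ← hPs, hPg _ (hgY j)]
  have hqnorm : ∀ n, ‖q n‖ ≤ ‖f n‖ := fun n => Y.norm_starProjection_apply_le (f n)
  have hqs : Summable (fun n => ‖q n‖ ^ 2) :=
    Summable.of_nonneg_of_le (fun n => sq_nonneg _) (fun n => by gcongr; exact hqnorm n) (aux_l2 f)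
  have hsupp : ∀ n, n ∉ Λ → q n = 0 := by
    intro n hn
    have : f n = 0 := by
      by_contra h
      exact hn (hspec h)
    simp [hq, this]
  have hinf : ∀ m, ∃ k ≥ m, ‖q k‖ ^ 2 ≠ 0 := by
    intro m
    by_contra hcon
    push Not at hcon
    have hle : (Submodule.span ℂ {x : X | ∃ f' ∈ ({f} : Set (H2 X)), ∃ k ≥ m, x = f' k}).topologicalClosure
        ≤ Yᗮ := by
      refine Submodule.topologicalClosure_minimal _ ?_ (Submodule.isClosed_orthogonal Y)
      rw [Submodule.span_le]
      rintro _ ⟨f', hf', k, hk, rfl⟩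
      obtain rfl : f' = f := hf'
      have h0 : q k = 0 := by simpa using hcon k hk
      exact (Submodule.starProjection_apply_eq_zero_iff Y).1 h0
    rw [Xstar, XstarF, iInf_eq_top] at hX
    rw [hX m, top_le_iff] at hle
    apply hg0
    rw [Submodule.mem_bot]
    ext j
    have h1 : g j ∈ Yᗮ := by rw [hle]; trivial
    have := Submodule.inner_right_of_mem_orthogonal (hgY j) h1
    simpa using this
  -- the compactness argument
  set K := closure {v : X | ∃ k, P (f k) ≠ 0 ∧ v = ‖P (f k)‖⁻¹ • P (f k)} with hK
  have hKY : ∀ u ∈ K, u ∈ Y ∧ ‖u‖ = 1 := by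
    intro u hu
    have hsub : K ⊆ (Y : Set X) ∩ {u | ‖u‖ = 1} := by
      refine closure_minimal ?_ (hYc.inter (isClosed_eq continuous_norm continuous_const))
      rintro _ ⟨k, hk, rfl⟩
      refine ⟨?_, ?_⟩
      · rw [← algebraMap_smul ℂ]
        exact Y.smul_mem _ (hPY _)
      · change ‖_‖ = 1
        rw [norm_smul, norm_inv, norm_norm, inv_mul_cancel₀ (norm_ne_zero_iff.2 hk)]
    exact hsub hu
  have hcov : K ⊆ ⋃ j : ℕ, {u | ⟪g j, u⟫_ℂ ≠ 0} := by
    intro u hu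
    by_contra hno
    simp only [Set.mem_iUnion, Set.mem_setOf_eq, not_exists, not_not] at hno
    obtain ⟨huY, hu1⟩ := hKY u hu
    have : Y ≤ (ℂ ∙ u)ᗮ := by
      refine Submodule.topologicalClosure_minimal _ ?_ (Submodule.isClosed_orthogonal _)
      rw [Submodule.span_le]
      rintro _ ⟨j, rfl⟩
      exact Submodule.mem_orthogonal_singleton_iff_inner_left.2 (hno j)
    have h2 := Submodule.mem_orthogonal_singleton_iff_inner_left.1 (this huY)
    rw [inner_self_eq_zero] at h2
    simp [h2] at hu1
  obtain ⟨J, hJ⟩ := hcpt.elim_finite_subcover _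
    (fun j => isOpen_ne_fun (by fun_prop) continuous_const) hcov
  obtain ⟨δ, hδ, hδK⟩ : ∃ δ : ℝ, 0 < δ ∧ ∀ u ∈ K, δ ≤ ∑ j ∈ J, ‖⟪g j, u⟫_ℂ‖ ^ 2 := by
    refine hcpt.exists_forall_le' (f := fun u => ∑ j ∈ J, ‖⟪g j, u⟫_ℂ‖ ^ 2)
      (Continuous.continuousOn (by fun_prop)) fun u hu => ?_
    obtain ⟨j, hj, hju⟩ : ∃ j ∈ J, ⟪g j, u⟫_ℂ ≠ 0 := by simpa using hJ hu
    refine Finset.sum_pos' (fun _ _ => sq_nonneg _) ⟨j, hj, ?_⟩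
    have := norm_pos_iff.2 hju
    positivity
  have hdiv := aux_diverge (fun n => ‖q n‖ ^ 2) (fun n => sq_nonneg _) hqs hinf
  set T : ℕ → ℝ := fun n => ∑' m, ‖q (n + 1 + m)‖ ^ 2 with hT
  have hT0 : ∀ n, 0 ≤ T n := fun n => tsum_nonneg fun m => sq_nonneg _
  have hsumj : ∀ j, Summable (fun n => ‖⟪g j, q n⟫_ℂ‖ ^ 2 / T n) := by
    intro j
    obtain ⟨N, hN⟩ := aux_ineq Λ hΛ (fun n => g n) q (aux_l2 g) hqs hsupp
      (fun n => by simpa only [hgq] using horth n) j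
    have hgs : Summable (fun m => ‖g (j + 1 + m)‖ ^ 2) := by
      have := (summable_nat_add_iff (j + 1)).2 (aux_l2 g)
      simpa [add_comm, add_left_comm] using this
    have hs := aux_summable Λ hΛ (fun m => ‖g (j + 1 + m)‖ ^ 2) (fun _ => sq_nonneg _) hgs
    rw [← summable_nat_add_iff N] at hs ⊢
    refine Summable.of_nonneg_of_le (fun n => div_nonneg (sq_nonneg _) (hT0 _)) (fun n => ?_) hs
    have hnn : 0 ≤ ∑' m, if n + N ∈ Λ ∧ n + N + 1 + m ∈ Λ then ‖g (j + 1 + m)‖ ^ 2 else 0 :=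
      tsum_nonneg fun m => by split_ifs <;> positivity
    by_cases hn : n + N ∈ Λ
    · exact div_le_of_le_mul₀ (hT0 _) hnn (hN (n + N) (by omega) hn)
    · rw [hsupp _ hn]
      simpa using hnn
  apply hdiv
  have hfin : Summable (fun n => δ⁻¹ * ∑ j ∈ J, ‖⟪g j, q n⟫_ℂ‖ ^ 2 / T n) :=
    (summable_sum fun j _ => hsumj j).mul_left _
  refine Summable.of_nonneg_of_le (fun n => div_nonneg (sq_nonneg _) (hT0 _)) (fun n => ?_) hfin
  rw [← Finset.sum_div, ← mul_div_assoc]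
  apply div_le_div_of_nonneg_right _ (hT0 n)
  rw [le_inv_mul_iff₀ hδ]
  by_cases hn : q n = 0
  · simp [hn]
  have h1 := hδK (‖q n‖⁻¹ • q n) (subset_closure ⟨n, hn, rfl⟩)
  have hqn : 0 < ‖q n‖ := norm_pos_iff.2 hn
  have h2 : ∀ j, ‖⟪g j, ‖q n‖⁻¹ • q n⟫_ℂ‖ ^ 2 = ‖⟪g j, q n⟫_ℂ‖ ^ 2 / ‖q n‖ ^ 2 := by
    intro j
    rw [inner_smul_right_eq_smul, norm_smul, norm_inv, norm_norm, mul_pow, inv_pow]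
    field_simp
  simp only [h2] at h1
  rwa [← Finset.sum_div, le_div_iff₀ (by positivity)] at h1

/-- A lacunary series with c.r.c. coefficient sequence is cyclic for the backward shift in
`H²(𝔻, X)` iff `X_*(f) = X`. -/
theorem cyclic_iff_Xstar_eq_top {X : Type*} [NormedAddCommGroup X] [InnerProductSpace ℂ X] [CompleteSpace X]
    [TopologicalSpace.SeparableSpace X]
    (Λ : Set ℕ) (hΛ : HadLac Λ) (hΛinf : Λ.Infinite)
    (f : H2 X) (hspec : spec f ⊆ Λ) (hcrc : CRC fun k : ℕ => f k) :
    Ef f = ⊤ ↔ Xstar f = ⊤ := by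
  exact ⟨aux_forward f, aux_backward Λ hΛ f hspec hcrc⟩

end
end

section
/- Let (n_k)_{k≥1} be a Hadamard lacunary sequence of nonnegative integers, with n_{k+1} ≥ d·n_k for all k ≥ 1 and some d > 1. Then there exists a number M such that for every integer I, the number of pairs (j, k) with j > k and n_j − n_k = I is at most M. -/
/-- For a Hadamard lacunary sequence `(nₖ)` there is `M` such that every integer `I` has at
most `M` representations `I = n_j − n_k` with `j > k`. -/
theorem lacunary_bounded_representations (n : ℕ → ℕ) (d : ℝ) (hd : 1 < d)
    (hmono : StrictMono n) (hlac : ∀ k, d * n k ≤ n (k + 1)) :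
    ∃ M : ℕ, ∀ I : ℕ,
      {p : ℕ × ℕ | p.2 < p.1 ∧ n p.1 = n p.2 + I}.encard ≤ (M : ℕ∞) := by
  obtain ⟨m, hm⟩ := pow_unbounded_of_one_lt (d / (d - 1)) hd
  have hd1 : 0 < d - 1 := by linarith
  rw [div_lt_iff₀ hd1] at hm
  have hpow : ∀ (i k : ℕ), d ^ i * n k ≤ n (k + i) := by
    intro i k
    induction i with
    | zero => simp
    | succ i ih =>
      have h1 := hlac (k + i)
      have h2 := mul_le_mul_of_nonneg_left ih (by linarith : (0 : ℝ) ≤ d)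
      rw [← add_assoc, pow_succ]
      linarith
  refine ⟨m, fun I => ?_⟩
  set S := {p : ℕ × ℕ | p.2 < p.1 ∧ n p.1 = n p.2 + I} with hS
  rcases S.eq_empty_or_nonempty with he | hne
  · simp [he]
  have hne' : (Prod.fst '' S).Nonempty := hne.image _
  obtain ⟨⟨j0, k0⟩, ⟨h1, h2⟩, h3⟩ := Nat.sInf_mem hne'
  simp only at h1 h2 h3
  have hI : 0 < I := by
    have := hmono h1
    omega
  have hmaps : Set.MapsTo Prod.fst S (Finset.Ico j0 (j0 + m) : Set ℕ) := by
    rintro ⟨j, k⟩ hp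
    have hmin : j0 ≤ j := h3 ▸ Nat.sInf_le ⟨(j, k), hp, rfl⟩
    obtain ⟨hkj, hn⟩ := hp
    simp only at hkj hn
    simp only [Finset.coe_Ico, Set.mem_Ico]
    refine ⟨hmin, ?_⟩
    by_contra! hc
    have a1 : d * n k ≤ n j :=
      (hlac k).trans (by exact_mod_cast hmono.monotone hkj)
    have a2 : (n j : ℝ) = n k + I := by exact_mod_cast hn
    have a3 : d ^ m * n j0 ≤ n j :=
      (hpow m j0).trans (by exact_mod_cast hmono.monotone hc)
    have a4 : (I : ℝ) ≤ n j0 := by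
      have : I ≤ n j0 := by omega
      exact_mod_cast this
    have a5 : d ^ m * I ≤ n j :=
      (mul_le_mul_of_nonneg_left a4 (by positivity)).trans a3
    have hI' : (0 : ℝ) < I := by exact_mod_cast hI
    have a6 := mul_lt_mul_of_pos_right hm hI'
    have a7 := mul_le_mul_of_nonneg_left a5 hd1.le
    have a8 : (d - 1) * n j ≤ d * I := by
      have : d * (n j : ℝ) = d * n k + d * I := by rw [a2]; ring
      linarith
    linarith
  have hinj : Set.InjOn Prod.fst S := by
    rintro ⟨j, k⟩ ⟨_, hp⟩ ⟨j', k'⟩ ⟨_, hq⟩ h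
    simp only at hp hq h
    subst h
    have : n k = n k' := by omega
    rw [hmono.injective this]
  calc S.encard ≤ (Finset.Ico j0 (j0 + m) : Set ℕ).encard :=
        Set.encard_le_encard_of_injOn hmaps hinj
    _ = m := by rw [Set.encard_coe_eq_coe_finsetCard]; simp
    _ ≤ m := le_rfl
end

section
/- Let (b_n)_{n≥0} be a sequence of nonnegative reals with ∑_{n≥0} b_n < ∞, and let (n_k)_{k≥1} be a Hadamard lacunary sequence of nonnegative integers. Then ∑_{k≥1} ∑_{j>k} b_{n_j − n_k} < ∞. -/
/-- If `(b_n)` is a nonnegative summable sequence and `(nₖ)` is Hadamard lacunary, then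
`∑_{k} ∑_{j > k} b_{n_j − n_k} < ∞`. -/
theorem lacunary_double_sum_summable (b : ℕ → ℝ) (hb : ∀ m, 0 ≤ b m) (hsum : Summable b)
    (n : ℕ → ℕ) (d : ℝ) (hd : 1 < d) (hmono : StrictMono n)
    (hlac : ∀ k, d * n k ≤ n (k + 1)) :
    Summable fun p : ℕ × ℕ => if p.2 < p.1 then b (n p.1 - n p.2) else 0 := by
  obtain ⟨L, hL⟩ := pow_unbounded_of_one_lt (d / (d - 1)) hd
  have hd1 : 0 < d - 1 := by linarith
  rw [div_lt_iff₀ hd1] at hL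
  have hL0 : 0 < L := by
    rcases Nat.eq_zero_or_pos L with h | h
    · subst h
      simp at hL
      linarith
    · exact h
  have hpow : ∀ l k, d ^ l * n k ≤ n (k + l) := by
    intro l
    induction l with
    | zero => intro k; simp
    | succ l ih =>
      intro k
      have h1 := hlac (k + l)
      have h2 := mul_le_mul_of_nonneg_left (ih k) (by linarith : (0 : ℝ) ≤ d)
      calc d ^ (l + 1) * n k = d * (d ^ l * n k) := by ring
        _ ≤ _ := h2.trans h1
  -- two pairs with the same difference cannot be far apart
  have key : ∀ j k j' k', k < j → k' < j' → n j - n k = n j' - n k' → ¬ (j + L ≤ j') := by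
    intro j k j' k' hk hk' he hj
    have a1 := hmono hk
    have a2 := hmono hk'
    have e : (n j : ℝ) - n k = n j' - n k' := by
      have : n j + n k' = n j' + n k := by omega
      have : (n j : ℝ) + n k' = n j' + n k := by exact_mod_cast this
      linarith
    have b1 : (n k : ℝ) < n j := by exact_mod_cast a1
    have b0 : (0 : ℝ) ≤ n k := Nat.cast_nonneg _
    have c1 : d * n k' ≤ n j' :=
      (hlac k').trans (by exact_mod_cast hmono.monotone (by omega : k' + 1 ≤ j'))
    have c2 : d ^ L * n j ≤ n j' :=
      (hpow L j).trans (by exact_mod_cast hmono.monotone hj)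
    have c3 : (d - 1) * (d ^ L * n j) ≤ (d - 1) * n j' := mul_le_mul_of_nonneg_left c2 hd1.le
    have c4 : d * n j < d ^ L * (d - 1) * n j := mul_lt_mul_of_pos_right hL (by linarith)
    have c5 : 0 ≤ d * n k := by positivity
    have c6 : d * ((n j : ℝ) - n k) = d * (n j' - n k') := by rw [e]
    nlinarith
  let S : ℕ → Set (ℕ × ℕ) := fun r => {p | p.2 < p.1 ∧ p.1 % L = r}
  have hS : ∀ r, Summable ((S r).indicator fun p : ℕ × ℕ => b (n p.1 - n p.2)) := by
    intro r
    rw [← summable_subtype_iff_indicator]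
    refine hsum.comp_injective (i := fun p : S r => n p.1.1 - n p.1.2) ?_
    rintro ⟨⟨j, k⟩, hk, hr⟩ ⟨⟨j', k'⟩, hk', hr'⟩ he
    simp only at hk hr hk' hr' he
    have far : ∀ x y, x % L = r → y % L = r → x < y → x + L ≤ y := by
      intro x y hx hy hxy
      have hdvd : L ∣ y - x := (Nat.modEq_iff_dvd' hxy.le).1 (hx.trans hy.symm)
      have := Nat.le_of_dvd (by omega) hdvd
      omega
    have hjj : j = j' := by
      rcases lt_trichotomy j j' with h | h | h
      · exact absurd (far _ _ hr hr' h) (key _ _ _ _ hk hk' he)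
      · exact h
      · exact absurd (far _ _ hr' hr h) (key _ _ _ _ hk' hk he.symm)
    subst hjj
    have a1 := hmono hk
    have a2 := hmono hk'
    have : k = k' := hmono.injective (by omega)
    subst this
    rfl
  have hfin := summable_sum (s := Finset.range L) fun r _ => hS r
  refine hfin.congr ?_
  rintro ⟨j, k⟩
  have hm : j % L < L := Nat.mod_lt _ hL0
  by_cases h : k < j <;> simp [S, Set.indicator_apply, h, hm]
end

section
/- Let X be a separable Hilbert space and f ∈ H²(𝔻, X) a lacunary series whose coefficient sequence (f̂(k))_{k≥0} is completely relatively compact. Let P denote the orthogonal projection of H²(𝔻, X) onto H²(𝔻, X_∞(f)). Then: (i) σ(f − Pf) ⊆ σ(f); and (ii) f − Pf is a polynomial. -/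
open scoped InnerProductSpace ENNReal
noncomputable section

variable {X : Type*} [NormedAddCommGroup X] [InnerProductSpace ℂ X]

/-- `X_∞(f)`: the closed span of all closed subspaces `Y ⊆ X` with
`H²(𝔻, Y) ⊆ E_{S*^N f}` for every `N ≥ 0`. -/
def Xinf (f : H2 X) : Submodule ℂ X :=
  (Submodule.span ℂ {x : X | ∃ Y : Submodule ℂ X, IsClosed (Y : Set X) ∧
      (∀ N : ℕ, H2sub Y ≤ Ef (bshift^[N] f)) ∧ x ∈ Y}).topologicalClosure

/-- The smallest closed `S*^N`-invariant subspace containing `f`;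
`f` is cyclic for `S*^N` iff this equals `⊤`. -/
def EfPow (f : H2 X) (N : ℕ) : Submodule ℂ (H2 X) :=
  (Submodule.span ℂ {g : H2 X | ∃ k : ℕ, g = bshift^[N * k] f}).topologicalClosure


/-! ### Helper lemmas -/

lemma hh_bshift_iter (f : H2 X) (n i : ℕ) : (bshift^[n] f) i = f (n + i) := by
  induction n generalizing f with
  | zero => simp
  | succ n ih =>
    rw [Function.iterate_succ_apply, ih]
    change f (n + i + 1) = _
    have e : n + i + 1 = n + 1 + i := by omega
    rw [e]

lemma hh_bshift_iter_sub (f g : H2 X) (n : ℕ) :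
    bshift^[n] (f - g) = bshift^[n] f - bshift^[n] g := by
  apply lp.ext; funext i
  rw [hh_bshift_iter, lp.coeFn_sub, lp.coeFn_sub, Pi.sub_apply, Pi.sub_apply,
    hh_bshift_iter, hh_bshift_iter]

lemma hh_hasSum_sq (h : H2 X) : HasSum (fun n => ‖h n‖ ^ 2) (‖h‖ ^ 2) := by
  have := lp.hasSum_norm (p := 2) (by norm_num) h
  simpa using this

/-- If a closed subspace contains all `z^n x`, `x ∈ Y`, it contains `H²(Y)`. -/
lemma hh_H2sub_le (E : Submodule ℂ (H2 X)) (hE : IsClosed (E : Set (H2 X))) (Y : Submodule ℂ X)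
    (h : ∀ x ∈ Y, ∀ n : ℕ, (lp.single 2 n x : H2 X) ∈ E) : H2sub Y ≤ E := by
  intro g hg
  have hs := lp.hasSum_single (p := 2) (by norm_num) g
  exact hE.mem_of_tendsto hs (Filter.Eventually.of_forall fun s =>
    E.sum_mem fun i _ => h _ (hg i) i)

lemma hh_Ef_closed (f : H2 X) : IsClosed (Ef f : Set (H2 X)) :=
  Submodule.isClosed_topologicalClosure _

lemma hh_iter_mem (f : H2 X) (N n : ℕ) (h : N ≤ n) : bshift^[n] f ∈ Ef (bshift^[N] f) := by
  apply Submodule.le_topologicalClosure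
  apply Submodule.subset_span
  refine ⟨_, rfl, n - N, ?_⟩
  rw [← Function.iterate_add_apply, Nat.sub_add_cancel h]

lemma hh_H2sub_Xinf_le (f : H2 X) (N : ℕ) : H2sub (Xinf f) ≤ Ef (bshift^[N] f) := by
  apply hh_H2sub_le _ (hh_Ef_closed _)
  intro x hx n
  let L : X →L[ℂ] H2 X := lp.singleContinuousLinearMap ℂ (fun _ : ℕ => X) 2 n
  have hle : Xinf f ≤ (Ef (bshift^[N] f)).comap (L : X →ₗ[ℂ] H2 X) := by
    apply Submodule.topologicalClosure_minimal
    · rw [Submodule.span_le]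
      rintro y ⟨Y, -, hY, hy⟩
      apply hY N
      intro k
      change (Pi.single n y : ∀ _ : ℕ, X) k ∈ Y
      by_cases hk : k = n
      · subst hk; simpa using hy
      · simp [hk]
    · exact (hh_Ef_closed _).preimage L.continuous
  exact hle hx

lemma hh_lac_growth (Λ : Set ℕ) (d : ℝ) (hd : 1 < d)
    (h : ∀ m ∈ Λ, ∀ n ∈ Λ, m < n → d * m ≤ n) (r : ℕ) (G : Finset ℕ) :
    (∀ x ∈ G, x ∈ Λ ∧ r ≤ x) → G.Nonempty → ∃ x ∈ G, d ^ G.card * r ≤ d * x := by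
  induction G using Finset.induction_on_max with
  | empty => intro _ h; simp at h
  | insert a s hs ih =>
    intro hG _
    have ha : a ∉ s := fun h => lt_irrefl _ (hs a h)
    refine ⟨a, by simp, ?_⟩
    rw [Finset.card_insert_of_notMem ha]
    rcases s.eq_empty_or_nonempty with rfl | hne
    · have : (r : ℝ) ≤ a := by exact_mod_cast (hG a (by simp)).2
      simp only [Finset.card_empty, zero_add, pow_one]
      gcongr
    · obtain ⟨x, hx, hxx⟩ := ih (fun x hx => hG x (by simp [hx])) hne
      have h1 := h x (hG x (by simp [hx])).1 a (hG a (by simp)).1 (hs x hx)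
      rw [pow_succ']
      calc d * d ^ s.card * r = d * (d ^ s.card * r) := by ring
        _ ≤ d * a := by
          apply mul_le_mul_of_nonneg_left _ (by linarith)
          linarith

/-- Bounded number of representations as a difference. -/
lemma hh_lac_count (Λ : Set ℕ) (hΛ : HadLac Λ) :
    ∃ C : ℕ, ∀ r : ℕ, 0 < r → ∀ F : Finset ℕ, (∀ n ∈ F, n ∈ Λ ∧ n + r ∈ Λ) → F.card ≤ C := by
  obtain ⟨d, hd, h⟩ := hΛ
  obtain ⟨C, hC⟩ := pow_unbounded_of_one_lt (d * (d / (d - 1))) hd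
  refine ⟨C, fun r hr F hF => ?_⟩
  by_contra hcon
  push Not at hcon
  have hinj : Set.InjOn (fun n => n + r) (F : Set ℕ) := fun a _ b _ hab => by simpa using hab
  have hcard : (F.image (fun n => n + r)).card = F.card := Finset.card_image_of_injOn hinj
  have hne : F.Nonempty := Finset.card_pos.mp (by omega)
  obtain ⟨x, hx, hxx⟩ := hh_lac_growth Λ d hd h r (F.image (fun n => n + r))
    (by
      intro x hx
      obtain ⟨n, hn, rfl⟩ := Finset.mem_image.mp hx
      exact ⟨(hF n hn).2, by omega⟩) (hne.image _)
  obtain ⟨n, hn, rfl⟩ := Finset.mem_image.mp hx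
  rw [hcard] at hxx
  have h1 := h n (hF n hn).1 (n + r) (hF n hn).2 (by omega)
  have hr' : (0 : ℝ) < r := by exact_mod_cast hr
  have hd1 : 0 < d - 1 := by linarith
  have h2 : d ^ C * (r : ℝ) ≤ d ^ F.card * r := by
    gcongr
    exact hd.le
  push_cast at h1 hxx
  have h3 : (n : ℝ) + r ≤ d / (d - 1) * r := by
    rw [div_mul_eq_mul_div, le_div_iff₀ hd1]
    nlinarith
  have h4 : d * ((n : ℝ) + r) ≤ d * (d / (d - 1) * r) := by gcongr
  have h5 : d * (d / (d - 1)) * r < d ^ C * r := by gcongr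
  linarith

open Classical in
lemma hh_norm_sum_sq (F : Finset ℕ) (x : ℕ → X) (C : ℕ)
    (hC : (F.filter (fun n => x n ≠ 0)).card ≤ C) :
    ‖∑ n ∈ F, x n‖ ^ 2 ≤ C * ∑ n ∈ F, ‖x n‖ ^ 2 := by
  classical
  have h1 : ∑ n ∈ F, x n = ∑ n ∈ F.filter (fun n => x n ≠ 0), x n :=
    (Finset.sum_filter_ne_zero F).symm
  rw [h1]
  calc ‖∑ n ∈ F.filter (fun n => x n ≠ 0), x n‖ ^ 2
      ≤ (∑ n ∈ F.filter (fun n => x n ≠ 0), ‖x n‖) ^ 2 := by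
        gcongr; exact norm_sum_le _ _
    _ ≤ (F.filter (fun n => x n ≠ 0)).card * ∑ n ∈ F.filter (fun n => x n ≠ 0), ‖x n‖ ^ 2 :=
        sq_sum_le_card_mul_sum_sq
    _ ≤ C * ∑ n ∈ F, ‖x n‖ ^ 2 := by
        apply mul_le_mul (by exact_mod_cast hC) _ (Finset.sum_nonneg fun _ _ => by positivity)
          (by positivity)
        exact Finset.sum_le_sum_of_subset_of_nonneg (Finset.filter_subset _ _)
          (fun _ _ _ => by positivity)

/-- Tail sums. -/
def hhT (h : H2 X) (n : ℕ) : ℝ := ∑' i, ‖h (i + n)‖ ^ 2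

/-- Weights. -/
def hhw (h : H2 X) (n : ℕ) : ℝ := ‖h n‖ ^ 2 / hhT h (n + 1)

lemma hh_T_hasSum (h : H2 X) (n : ℕ) : HasSum (fun i => ‖h (i + n)‖ ^ 2) (hhT h n) :=
  ((summable_nat_add_iff n).2 (hh_hasSum_sq h).summable).hasSum

lemma hh_T_succ (h : H2 X) (n : ℕ) : hhT h n = ‖h n‖ ^ 2 + hhT h (n + 1) := by
  have := (hh_T_hasSum h n).summable.tsum_eq_zero_add
  rw [zero_add] at this
  rw [hhT, this, hhT]
  congr 2; funext i
  have e : i + 1 + n = i + (n + 1) := by omega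
  rw [e]

lemma hh_T_nonneg (h : H2 X) (n : ℕ) : 0 ≤ hhT h n := tsum_nonneg fun _ => by positivity

lemma hh_w_nonneg (h : H2 X) (n : ℕ) : 0 ≤ hhw h n :=
  div_nonneg (by positivity) (hh_T_nonneg _ _)

lemma hh_T_pos (h : H2 X) (hinf : (spec h).Infinite) (n : ℕ) : 0 < hhT h n := by
  obtain ⟨k, hk, hnk⟩ := hinf.exists_gt n
  have hle := (hh_T_hasSum h n).summable.le_tsum (k - n) (fun _ _ => by positivity)
  have : k - n + n = k := by omega
  rw [this] at hle
  have : 0 < ‖h k‖ := norm_pos_iff.2 hk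
  exact lt_of_lt_of_le (by positivity) hle

lemma hh_not_summable (h : H2 X) (hinf : (spec h).Infinite) : ¬ Summable (hhw h) := by
  intro hs
  have key : ∀ n, hhT h 0 ≤ hhT h n * Real.exp (∑ i ∈ Finset.range n, hhw h i) := by
    intro n
    induction n with
    | zero => simp
    | succ n ih =>
      have hp := hh_T_pos h hinf (n + 1)
      have h1 : hhT h n = hhT h (n + 1) * (hhw h n + 1) := by
        rw [hh_T_succ h n, hhw]; field_simp
      have h2 := Real.add_one_le_exp (hhw h n)
      rw [Finset.sum_range_succ, Real.exp_add]
      calc _ ≤ _ := ih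
        _ = hhT h (n + 1) * (hhw h n + 1) * Real.exp (∑ i ∈ Finset.range n, hhw h i) := by
          rw [← h1]
        _ ≤ hhT h (n + 1) * Real.exp (hhw h n) * Real.exp (∑ i ∈ Finset.range n, hhw h i) := by
          gcongr
        _ = _ := by ring
  have key2 : ∀ n, hhT h 0 ≤ hhT h n * Real.exp (∑' i, hhw h i) := by
    intro n
    refine (key n).trans ?_
    have := hs.sum_le_tsum (Finset.range n) (fun i _ => hh_w_nonneg h i)
    have := hh_T_nonneg h n
    gcongr
  have ht : Filter.Tendsto (fun n => hhT h n * Real.exp (∑' i, hhw h i)) Filter.atTop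
      (nhds (0 * Real.exp (∑' i, hhw h i))) :=
    (tendsto_sum_nat_add (fun i => ‖h i‖ ^ 2)).mul_const _
  rw [zero_mul] at ht
  have := ge_of_tendsto' ht key2
  have := hh_T_pos h hinf 0
  linarith

/-- Compactness: a direction `v` around which the weights are not summable. -/
lemma hh_exists_dir (h : H2 X) (hinf : (spec h).Infinite) (u : ℕ → X) (K : Set X)
    (hK : IsCompact K) (hu : ∀ n, h n ≠ 0 → u n ∈ K) :
    ∃ v ∈ K, ∀ ε > 0, ¬ Summable (Set.indicator {n | h n ≠ 0 ∧ ‖u n - v‖ < ε} (hhw h)) := by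
  by_contra hcon
  push Not at hcon
  have main : Summable (Set.indicator {n | h n ≠ 0 ∧ u n ∈ K} (hhw h)) := by
    refine hK.induction_on (p := fun s => Summable (Set.indicator {n | h n ≠ 0 ∧ u n ∈ s} (hhw h)))
      ?_ ?_ ?_ ?_
    · simp
    · intro s t hst ht
      refine Summable.of_nonneg_of_le (fun n => Set.indicator_nonneg (fun n _ => hh_w_nonneg h n) n)
        (fun n => ?_) ht
      have hsub : {n | h n ≠ 0 ∧ u n ∈ s} ⊆ {n | h n ≠ 0 ∧ u n ∈ t} :=
        fun n hn => ⟨hn.1, hst hn.2⟩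
      exact Set.indicator_le_indicator_of_subset hsub (fun n => hh_w_nonneg h n) n
    · intro s t hs ht
      refine Summable.of_nonneg_of_le (fun n => Set.indicator_nonneg (fun n _ => hh_w_nonneg h n) n)
        (fun n => ?_) (hs.add ht)
      have := hh_w_nonneg h n
      by_cases h0 : h n = 0 <;> by_cases h1 : u n ∈ s <;> by_cases h2 : u n ∈ t <;>
        simp [Set.indicator, h0, h1, h2, this]
    · intro x hx
      obtain ⟨ε, hε, hsum⟩ := hcon x hx
      refine ⟨Metric.ball x ε, mem_nhdsWithin_of_mem_nhds (Metric.ball_mem_nhds x hε), ?_⟩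
      simpa [Metric.mem_ball, dist_eq_norm] using hsum
  apply hh_not_summable h hinf
  convert main using 1
  funext n
  by_cases hn : h n = 0
  · simp [Set.indicator, hn, hhw]
  · simp [Set.indicator, hn, hu n hn]

lemma hh_select (h : H2 X) (A : Set ℕ) (hA : ¬ Summable (Set.indicator A (hhw h))) (n0 : ℕ)
    (M : ℝ) : ∃ F : Finset ℕ, (∀ n ∈ F, n ∈ A ∧ n0 ≤ n) ∧ M ≤ ∑ n ∈ F, hhw h n := by
  classical
  have hnn : ∀ n, 0 ≤ Set.indicator A (hhw h) n :=
    fun n => Set.indicator_nonneg (fun n _ => hh_w_nonneg h n) n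
  rw [not_summable_iff_tendsto_nat_atTop_of_nonneg hnn] at hA
  obtain ⟨p, hp⟩ := (hA.eventually_ge_atTop
    (M + ∑ i ∈ Finset.range n0, Set.indicator A (hhw h) i)).exists
  refine ⟨(Finset.range p).filter (fun n => n ∈ A ∧ n0 ≤ n), fun n hn => (Finset.mem_filter.1 hn).2,
    ?_⟩
  have h1 : ∑ i ∈ Finset.range p, Set.indicator A (hhw h) i ≤
      ∑ n ∈ (Finset.range p).filter (fun n => n ∈ A ∧ n0 ≤ n), hhw h n +
      ∑ i ∈ Finset.range n0, Set.indicator A (hhw h) i := by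
    have e1 : ∑ n ∈ (Finset.range p).filter (fun n => n ∈ A ∧ n0 ≤ n), hhw h n
        = ∑ n ∈ (Finset.range p).filter (fun n => n0 ≤ n), Set.indicator A (hhw h) n := by
      rw [Finset.sum_filter, Finset.sum_filter]
      refine Finset.sum_congr rfl fun n _ => ?_
      by_cases a : n ∈ A <;> by_cases b : n0 ≤ n <;> simp [a, b]
    rw [e1, ← Finset.sum_filter_add_sum_filter_not (Finset.range p) (fun n => n0 ≤ n)]
    refine add_le_add_right ?_ _
    refine Finset.sum_le_sum_of_subset_of_nonneg (fun n hn => ?_) (fun n _ _ => hnn n)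
    simp at hn ⊢
    omega
  linarith

lemma hh_gap (Λ : Set ℕ) (hΛ : HadLac Λ) (m : ℕ) :
    ∃ n0 : ℕ, ∀ n ∈ Λ, n0 ≤ n → ∀ k ∈ Λ, k < n → k + m < n := by
  obtain ⟨d, hd, h⟩ := hΛ
  obtain ⟨n0, hn0⟩ := exists_nat_gt (d * m / (d - 1))
  refine ⟨n0, fun n hn hn0n k hk hkn => ?_⟩
  by_contra hcon
  push Not at hcon
  have h1 := h k hk n hn hkn
  have h2 : (n : ℝ) ≤ k + m := by exact_mod_cast hcon
  have h3 : (n0 : ℝ) ≤ n := by exact_mod_cast hn0n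
  rw [div_lt_iff₀ (by linarith)] at hn0
  have h4 : (n0 : ℝ) * (d - 1) ≤ n * (d - 1) := by
    apply mul_le_mul_of_nonneg_right h3; linarith
  nlinarith

lemma hh_s_hasSum (h : H2 X) (n m : ℕ) :
    HasSum (fun i => if m < i then ‖h (n + (i - m))‖ ^ 2 else 0) (hhT h (n + 1)) := by
  have h0 := hh_T_hasSum h (n + 1)
  let s : ℕ → ℝ := fun i => if m < i then ‖h (n + (i - m))‖ ^ 2 else 0
  have h1 : HasSum (fun j => s (j + (m + 1))) (hhT h (n + 1)) := by
    have e : (fun j => s (j + (m + 1))) = fun i => ‖h (i + (n + 1))‖ ^ 2 := by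
      funext j
      have e1 : n + (j + (m + 1) - m) = j + (n + 1) := by omega
      have e2 : m < j + (m + 1) := by omega
      simp only [s, if_pos e2, e1]
    rw [e]; exact h0
  have h2 := (hasSum_nat_add_iff (f := s) (m + 1)).1 h1
  have h3 : ∑ i ∈ Finset.range (m + 1), s i = 0 := by
    refine Finset.sum_eq_zero fun i hi => ?_
    rw [Finset.mem_range] at hi
    exact if_neg (by omega)
  rw [h3, add_zero] at h2
  exact h2

lemma hh_key (h : H2 X) (hlac : HadLac (spec h)) (hinf : (spec h).Infinite) (v : X)
    (hv : ∀ ε > 0, ¬ Summable (Set.indicator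
      {n | h n ≠ 0 ∧ ‖(‖h n‖⁻¹ • h n) - v‖ < ε} (hhw h)))
    (E : Submodule ℂ (H2 X)) (hE : IsClosed (E : Set (H2 X))) (N : ℕ)
    (hN : ∀ n ≥ N, bshift^[n] h ∈ E) (m : ℕ) : (lp.single 2 m v : H2 X) ∈ E := by
  classical
  obtain ⟨C, hC⟩ := hh_lac_count _ hlac
  obtain ⟨n0, hn0⟩ := hh_gap _ hlac m
  have hcl : (lp.single 2 m v : H2 X) ∈ closure (E : Set (H2 X)) := by
    rw [Metric.mem_closure_iff]
    intro ε hε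
    obtain ⟨F, hF, hW⟩ := hh_select h _ (hv (ε / 2) (by positivity)) (n0 + N + m)
      (1 + 8 * C / ε ^ 2)
    set W := ∑ n ∈ F, hhw h n with hWdef
    have hCε : 0 ≤ 8 * (C : ℝ) / ε ^ 2 := by positivity
    have hWpos : 0 < W := by linarith
    have hnz : ∀ n ∈ F, h n ≠ 0 := fun n hn => (hF n hn).1.1
    have hnp : ∀ n ∈ F, 0 < ‖h n‖ := fun n hn => norm_pos_iff.2 (hnz n hn)
    let c : ℕ → ℝ := fun n => hhw h n / W * ‖h n‖⁻¹
    let y : H2 X := ∑ n ∈ F, (c n : ℂ) • bshift^[n - m] h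
    have hyE : y ∈ E := E.sum_mem fun n hn => E.smul_mem _ (hN _ (by have := (hF n hn).2; omega))
    let a : X := ∑ n ∈ F, (c n : ℂ) • h n
    let R : H2 X := y - lp.single 2 m a
    have hycoe : ∀ i, y i = ∑ n ∈ F, (c n : ℂ) • h (n - m + i) := by
      intro i
      simp only [y]
      rw [lp.coeFn_sum, Finset.sum_apply]
      refine Finset.sum_congr rfl fun n _ => ?_
      rw [lp.coeFn_smul, Pi.smul_apply, hh_bshift_iter]
    have hRi : ∀ i, R i = ∑ n ∈ F, if m < i then (c n : ℂ) • h (n + (i - m)) else 0 := by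
      intro i
      have : R i = y i - (Pi.single m a : ∀ _ : ℕ, X) i := by
        simp only [R]; rw [lp.coeFn_sub, Pi.sub_apply, lp.coeFn_single]
      rw [this, hycoe]
      rcases lt_trichotomy i m with him | him | him
      · rw [Pi.single_eq_of_ne him.ne, sub_zero]
        refine Finset.sum_congr rfl fun n hn => ?_
        rw [if_neg (by omega)]
        have hnn := (hF n hn).2
        have : h (n - m + i) = 0 := by
          by_contra hne
          have := hn0 n (hnz n hn) (by omega) (n - m + i) hne (by omega)
          omega
        rw [this, smul_zero]
      · subst him
        rw [Pi.single_eq_same]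
        simp only [lt_irrefl, if_false, Finset.sum_const_zero, a]
        rw [sub_eq_zero]
        refine Finset.sum_congr rfl fun n hn => ?_
        have hnn := (hF n hn).2
        rw [Nat.sub_add_cancel (by omega)]
      · rw [Pi.single_eq_of_ne him.ne', sub_zero]
        refine Finset.sum_congr rfl fun n hn => ?_
        have hnn := (hF n hn).2
        have e : n - m + i = n + (i - m) := by omega
        rw [if_pos him, e]
    -- pointwise bound
    have hRb : ∀ i, ‖R i‖ ^ 2 ≤ C * ∑ n ∈ F, c n ^ 2 *
        (if m < i then ‖h (n + (i - m))‖ ^ 2 else 0) := by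
      intro i
      rw [hRi]
      by_cases him : m < i
      · simp only [if_pos him]
        refine (hh_norm_sum_sq F _ C ?_).trans (le_of_eq ?_)
        · apply hC (i - m) (by omega)
          intro n hn
          rw [Finset.mem_filter] at hn
          exact ⟨hnz n hn.1, fun h0 => hn.2 (by rw [h0, smul_zero])⟩
        · congr 1
          refine Finset.sum_congr rfl fun n _ => ?_
          rw [norm_smul, mul_pow, Complex.norm_real, Real.norm_eq_abs, sq_abs]
      · simp [him]
    have hsumB : HasSum (fun i => C * ∑ n ∈ F, c n ^ 2 *
        (if m < i then ‖h (n + (i - m))‖ ^ 2 else 0))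
        (C * ∑ n ∈ F, c n ^ 2 * hhT h (n + 1)) :=
      (hasSum_sum fun n _ => (hh_s_hasSum h n m).mul_left _).mul_left _
    have hR1 : ‖R‖ ^ 2 ≤ C * ∑ n ∈ F, c n ^ 2 * hhT h (n + 1) :=
      hasSum_le hRb (hh_hasSum_sq R) hsumB
    have hR2 : ∑ n ∈ F, c n ^ 2 * hhT h (n + 1) = 1 / W := by
      have : ∀ n ∈ F, c n ^ 2 * hhT h (n + 1) = hhw h n / W ^ 2 := by
        intro n hn
        have h1 := hnp n hn
        have h2 := hh_T_pos h hinf (n + 1)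
        simp only [c, hhw]
        field_simp
      rw [Finset.sum_congr rfl this, ← Finset.sum_div, ← hWdef]
      field_simp
    rw [hR2] at hR1
    have hR3 : ‖R‖ < ε / 2 := by
      have : (C : ℝ) * (1 / W) < (ε / 2) ^ 2 := by
        rw [mul_one_div, div_lt_iff₀ hWpos]
        have h1 : (1 + 8 * C / ε ^ 2) * (ε / 2) ^ 2 ≤ (ε / 2) ^ 2 * W := by
          rw [mul_comm]; gcongr
        have h2 : (1 + 8 * C / ε ^ 2) * (ε / 2) ^ 2 = ε ^ 2 / 4 + 2 * C := by
          field_simp; ring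
        have : (0 : ℝ) ≤ C := by positivity
        have : 0 < ε ^ 2 := by positivity
        linarith
      exact lt_of_pow_lt_pow_left₀ 2 (by positivity) (lt_of_le_of_lt hR1 this)
    have ha : ‖a - v‖ ≤ ε / 2 := by
      have hone : ∑ n ∈ F, hhw h n / W = 1 := by
        rw [← Finset.sum_div, ← hWdef]; exact div_self hWpos.ne'
      have : a - v = ∑ n ∈ F, (hhw h n / W) • ((‖h n‖⁻¹ • h n) - v) := by
        simp only [smul_sub, Finset.sum_sub_distrib, ← Finset.sum_smul, hone, one_smul, a]
        congr 1
        refine Finset.sum_congr rfl fun n _ => ?_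
        rw [smul_smul, Complex.coe_smul]
      rw [this]
      refine (norm_sum_le _ _).trans ?_
      calc ∑ n ∈ F, ‖(hhw h n / W) • ((‖h n‖⁻¹ • h n) - v)‖
          ≤ ∑ n ∈ F, hhw h n / W * (ε / 2) := by
            refine Finset.sum_le_sum fun n hn => ?_
            have h0 : 0 ≤ hhw h n / W := div_nonneg (hh_w_nonneg h n) hWpos.le
            rw [norm_smul, Real.norm_of_nonneg h0]
            exact mul_le_mul_of_nonneg_left (hF n hn).1.2.le h0
        _ = ε / 2 := by rw [← Finset.sum_mul, hone, one_mul]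
    refine ⟨y, hyE, ?_⟩
    rw [dist_comm, dist_eq_norm]
    have : y - lp.single 2 m v = R + lp.single 2 m (a - v) := by
      rw [lp.single_sub]; simp only [R]; abel
    rw [this]
    refine lt_of_le_of_lt (norm_add_le _ _) ?_
    rw [lp.norm_single (by norm_num)]
    linarith
  rwa [hE.closure_eq] at hcl

/-- For a lacunary series `f` with c.r.c. coefficients, writing `P` for the orthogonal
projection of `H²(𝔻, X)` onto `H²(𝔻, X_∞(f))` (characterized by `P f ∈ H²(𝔻, X_∞(f))` and
`f − P f ⟂ H²(𝔻, X_∞(f))`), we have `σ(f − P f) ⊆ σ(f)` and `f − P f` is a polynomial. -/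
theorem proj_Xinf_spec_subset_and_poly {X : Type*} [NormedAddCommGroup X] [InnerProductSpace ℂ X] [CompleteSpace X]
    [TopologicalSpace.SeparableSpace X]
    (f : H2 X) (hlac : HadLac (spec f)) (hcrc : CRC fun k : ℕ => f k)
    (q : H2 X) (hqmem : q ∈ H2sub (Xinf f))
    (hqorth : ∀ g ∈ H2sub (Xinf f), ⟪f - q, g⟫_ℂ = 0) :
    spec (f - q) ⊆ spec f ∧ PolyH2 (f - q) := by
  classical
  set Y := Xinf f with hY
  have hYcl : IsClosed (Y : Set X) := Submodule.isClosed_topologicalClosure _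
  have : CompleteSpace Y := hYcl.completeSpace_coe
  have hfq : ∀ k, (f - q) k = f k - q k := fun k => by rw [lp.coeFn_sub, Pi.sub_apply]
  have horth : ∀ k, (f - q) k ∈ Yᗮ := by
    intro k
    rw [Submodule.mem_orthogonal']
    intro y hy
    have hmem : (lp.single 2 k y : H2 X) ∈ H2sub Y := by
      intro i
      change (Pi.single k y : ∀ _ : ℕ, X) i ∈ Y
      by_cases hk : i = k
      · subst hk; simpa using hy
      · simp [hk]
    have := hqorth _ hmem
    rwa [lp.inner_single_right] at this
  have hproj : ∀ k, Yᗮ.starProjection (f k) = (f - q) k := by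
    intro k
    apply Submodule.eq_starProjection_of_mem_orthogonal (horth k)
    rw [hfq, sub_sub_cancel]
    exact Submodule.le_orthogonal_orthogonal Y (hqmem k)
  have hspec : spec (f - q) ⊆ spec f := by
    intro k hk hfk
    apply hk
    rw [← hproj k, hfk, map_zero]
  refine ⟨hspec, ?_⟩
  by_contra hnot
  have hinf : (spec (f - q)).Infinite := hnot
  obtain ⟨d, hd, hdl⟩ := hlac
  have hlac' : HadLac (spec (f - q)) :=
    ⟨d, hd, fun m hm n hn hmn => hdl m (hspec hm) n (hspec hn) hmn⟩
  have hcomp := hcrc Yᗮ.starProjection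
    ⟨fun x => Submodule.starProjection_eq_self_iff.2 (Submodule.starProjection_apply_mem _ x),
      fun x y => Submodule.inner_starProjection_left_eq_right _ x y⟩
  simp only [hproj] at hcomp
  obtain ⟨v, hvK, hv⟩ := hh_exists_dir (f - q) hinf (fun n => ‖(f - q) n‖⁻¹ • (f - q) n) _ hcomp
    (fun n hn => subset_closure ⟨n, hn, rfl⟩)
  have hsub : closure {v : X | ∃ k, (f - q) k ≠ 0 ∧ v = ‖(f - q) k‖⁻¹ • (f - q) k} ⊆
      (Yᗮ : Set X) ∩ Metric.sphere 0 1 := by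
    apply closure_minimal
    · rintro w ⟨k, hk, rfl⟩
      refine ⟨?_, ?_⟩
      · rw [← Complex.coe_smul]
        exact Submodule.smul_mem _ _ (horth k)
      · rw [mem_sphere_zero_iff_norm, norm_smul, norm_inv, norm_norm,
          inv_mul_cancel₀ (norm_ne_zero_iff.2 hk)]
    · exact (Submodule.isClosed_orthogonal Y).inter Metric.isClosed_sphere
  obtain ⟨hvo, hv1⟩ := hsub hvK
  have hvY : v ∈ Y := by
    apply Submodule.le_topologicalClosure
    apply Submodule.subset_span
    refine ⟨Submodule.span ℂ {v}, Submodule.closed_of_finiteDimensional _, fun N => ?_,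
      Submodule.mem_span_singleton_self v⟩
    apply hh_H2sub_le _ (hh_Ef_closed _)
    intro x hx n
    obtain ⟨c, rfl⟩ := Submodule.mem_span_singleton.1 hx
    rw [lp.single_smul]
    apply Submodule.smul_mem
    refine hh_key (f - q) hlac' hinf v hv _ (hh_Ef_closed _) N (fun k hk => ?_) n
    rw [hh_bshift_iter_sub]
    refine Submodule.sub_mem _ (hh_iter_mem f N k hk) (hh_H2sub_Xinf_le f N fun i => ?_)
    rw [hh_bshift_iter]
    exact hqmem _
  have h0 : ⟪v, v⟫_ℂ = 0 := (Submodule.mem_orthogonal Y v).1 hvo v hvY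
  rw [inner_self_eq_zero] at h0
  rw [h0] at hv1
  simp at hv1


end
end
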